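/- arXiv:2605.26506 — 5 statements merged into one kernel-verified Lean document; each statement's English description precedes it below -/
import Mathlib

section
/- For every s ∈ (1,3) there exists a constant C = C(s) > 0 such that for every smooth vector field ξ : ℝ³ → ℝ³ with compact support contained in ℝ³ \ {0}, one has the weighted div-curl estimate ∫_{ℝ³} ( |x|^{s-2} Σ_{i,j=1}^{3} (∂_i ξ_j)² + |x|^{s-4} |ξ|² ) dx ≤ C ∫_{ℝ³} |x|^{s-2} ( (div ξ)² + |curl ξ|² ) dx. -/
open MeasureTheory

/-- The Euclidean norm on `ℝ³`. -/
noncomputable def enorm3 (x : Fin 3 → ℝ) : ℝ := Real.sqrt (∑ i, (x i) ^ 2)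

/-- The partial derivative `∂_i ξ_j` of a vector field on `ℝ³`. -/
noncomputable def pdc (ξ : (Fin 3 → ℝ) → Fin 3 → ℝ) (i j : Fin 3) (x : Fin 3 → ℝ) : ℝ :=
  fderiv ℝ ξ x (Pi.single i 1) j

/-- The Levi-Civita symbol on three indices, with `ε_{123} = 1`. -/
noncomputable def eps3 (i j k : Fin 3) : ℝ :=
  (((j : ℕ) : ℝ) - ((i : ℕ) : ℝ)) * (((k : ℕ) : ℝ) - ((i : ℕ) : ℝ)) *
    (((k : ℕ) : ℝ) - ((j : ℕ) : ℝ)) / 2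

/-- The divergence `div ξ = Σ_i ∂_i ξ_i`. -/
noncomputable def div3 (ξ : (Fin 3 → ℝ) → Fin 3 → ℝ) (x : Fin 3 → ℝ) : ℝ :=
  ∑ i, pdc ξ i i x

/-- The curl `(curl ξ)_i = Σ_{j,k} ε_{ijk} ∂_j ξ_k`. -/
noncomputable def curl3 (ξ : (Fin 3 → ℝ) → Fin 3 → ℝ) (i : Fin 3) (x : Fin 3 → ℝ) : ℝ :=
  ∑ j, ∑ k, eps3 i j k * pdc ξ j k x

/-- Smooth, compactly supported, vanishing near the origin. -/
structure GoodF (g : (Fin 3 → ℝ) → ℝ) : Prop where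
  sm : ContDiff ℝ (⊤ : ℕ∞) g
  cs : HasCompactSupport g
  z : g =ᶠ[nhds 0] 0

/-- partial derivative of a scalar function -/
noncomputable def dd (i : Fin 3) (f : (Fin 3 → ℝ) → ℝ) (x : Fin 3 → ℝ) : ℝ :=
  fderiv ℝ f x (Pi.single i 1)

/-- squared Euclidean norm -/
noncomputable def qq (x : Fin 3 → ℝ) : ℝ := ∑ i, (x i) ^ 2

lemma qq_pos {x : Fin 3 → ℝ} (hx : x ≠ 0) : 0 < qq x := by
  obtain ⟨i, hi⟩ := Function.ne_iff.mp hx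
  exact Finset.sum_pos' (fun j _ => sq_nonneg _) ⟨i, Finset.mem_univ _, by
    have : x i ≠ 0 := hi
    positivity⟩

lemma qq_smooth : ContDiff ℝ (⊤ : ℕ∞) qq := by
  unfold qq
  fun_prop

lemma qq_deriv (x : Fin 3 → ℝ) : HasFDerivAt qq (∑ i, (2 * x i) • (ContinuousLinearMap.proj i : (Fin 3 → ℝ) →L[ℝ] ℝ)) x := by
  unfold qq
  refine HasFDerivAt.fun_sum fun j _ => ?_
  have := ((ContinuousLinearMap.proj j : (Fin 3 → ℝ) →L[ℝ] ℝ).hasFDerivAt (x := x)).pow 2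
  simpa using this

lemma dd_qq (i : Fin 3) (x : Fin 3 → ℝ) : dd i qq x = 2 * x i := by
  unfold dd
  rw [(qq_deriv x).fderiv]
  simp [Pi.single_apply]

namespace GoodF
variable {f g : (Fin 3 → ℝ) → ℝ}

lemma integrable (hf : GoodF f) : Integrable f :=
  hf.sm.continuous.integrable_of_hasCompactSupport hf.cs

lemma diff (hf : GoodF f) : Differentiable ℝ f := hf.sm.differentiable (by simp)

lemma add (hf : GoodF f) (hg : GoodF g) : GoodF (fun x => f x + g x) :=
  ⟨hf.sm.add hg.sm, hf.cs.add hg.cs, by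
    filter_upwards [hf.z, hg.z] with x h1 h2
    simp [h1, h2]⟩

lemma mulL {φ : (Fin 3 → ℝ) → ℝ} (hφ : ∀ x ≠ 0, ContDiffAt ℝ (⊤ : ℕ∞) φ x) (hg : GoodF g) :
    GoodF (fun x => φ x * g x) := by
  have hz : (fun x => φ x * g x) =ᶠ[nhds 0] 0 := by
    filter_upwards [hg.z] with x h1
    simp [h1]
  refine ⟨?_, hg.cs.mul_left, hz⟩
  rw [contDiff_iff_contDiffAt]
  intro x
  by_cases hx : x = 0
  · subst hx
    exact (contDiffAt_const (c := (0:ℝ))).congr_of_eventuallyEq hz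
  · exact (hφ x hx).mul hg.sm.contDiffAt

lemma mul (hf : GoodF f) (hg : GoodF g) : GoodF (fun x => f x * g x) :=
  mulL (fun _ _ => hf.sm.contDiffAt) hg

lemma sq (hf : GoodF f) : GoodF (fun x => f x ^ 2) := by
  simpa [pow_two] using hf.mul hf

lemma const_mul (c : ℝ) (hg : GoodF g) : GoodF (fun x => c * g x) :=
  mulL (fun _ _ => contDiffAt_const) hg

lemma zero : GoodF (fun _ => 0) :=
  ⟨contDiff_const, HasCompactSupport.zero, Filter.EventuallyEq.rfl⟩

lemma sum {ι : Type} (s : Finset ι) {F : ι → (Fin 3 → ℝ) → ℝ} (h : ∀ i, GoodF (F i)) :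
    GoodF (fun x => ∑ i ∈ s, F i x) := by
  classical
  induction s using Finset.induction_on with
  | empty => simpa using zero
  | insert a s ha ih =>
    simp only [Finset.sum_insert ha]
    exact (h a).add ih

lemma d (i : Fin 3) (hf : GoodF f) : GoodF (dd i f) := by
  refine ⟨?_, hf.cs.fderiv_apply ℝ _, ?_⟩
  · exact (hf.sm.fderiv_right (m := (⊤ : ℕ∞)) (by simp)).clm_apply contDiff_const
  · have := hf.z.fderiv (𝕜 := ℝ)
    filter_upwards [this] with x hx
    simp [dd, hx]

lemma int_d (i : Fin 3) (hf : GoodF f) : ∫ x, dd i f x = 0 := by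
  have := integral_mul_fderiv_eq_neg_fderiv_mul_of_integrable (μ := (volume : Measure (Fin 3 → ℝ)))
    (f := fun _ => (1:ℝ)) (g := f) (v := Pi.single i 1) (by simp)
    (by simp only [one_mul]; exact (hf.d i).integrable) (by simpa using hf.integrable) (by simp)
    (fun x _ => hf.diff x)
  simpa [dd] using this

lemma parts (i : Fin 3) (hf : GoodF f) (hg : GoodF g) :
    ∫ x, f x * dd i g x = - ∫ x, dd i f x * g x :=
  integral_mul_fderiv_eq_neg_fderiv_mul_of_integrable 
    ((hf.d i).mul hg).integrable (hf.mul (hg.d i)).integrable (hf.mul hg).integrable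
    (fun x _ => hf.diff x) (fun x _ => hg.diff x)

lemma dd_comm (i j : Fin 3) (hf : GoodF f) (x) : dd i (dd j f) x = dd j (dd i f) x := by
  have hs : IsSymmSndFDerivAt ℝ f x := by
    apply (hf.sm.contDiffAt).isSymmSndFDerivAt
    simp only [minSmoothness_of_isRCLikeNormedField]
    exact WithTop.coe_le_coe.mpr (le_top : (2 : ℕ∞) ≤ ⊤)
  have hd : DifferentiableAt ℝ (fderiv ℝ f) x :=
    ((hf.sm.fderiv_right (m := (⊤ : ℕ∞)) (by simp)).differentiable (by simp)) x
  have key : ∀ a b : Fin 3, dd a (dd b f) x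
      = fderiv ℝ (fderiv ℝ f) x (Pi.single a 1) (Pi.single b 1) := by
    intro a b
    change fderiv ℝ (fun y => fderiv ℝ f y (Pi.single b 1)) x (Pi.single a 1) = _
    rw [fderiv_clm_apply hd (differentiableAt_const _)]
    simp
  rw [key, key, hs.eq]

lemma swap (i j : Fin 3) (hf : GoodF f) (hg : GoodF g) :
    ∫ x, dd i f x * dd j g x = ∫ x, dd j f x * dd i g x := by
  have h1 := parts i hf (hg.d j)
  have h2 := parts j hf (hg.d i)
  have h3 : ∀ x, f x * dd i (dd j g) x = f x * dd j (dd i g) x := fun x => by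
    rw [dd_comm i j hg]
  simp only [h3] at h1
  linarith

lemma dd_mul {φ : (Fin 3 → ℝ) → ℝ} {x} (i : Fin 3) (hφ : DifferentiableAt ℝ φ x)
    (hg : DifferentiableAt ℝ g x) :
    dd i (fun x => φ x * g x) x = φ x * dd i g x + dd i φ x * g x := by
  unfold dd
  rw [fderiv_fun_mul hφ hg]
  simp [mul_comm]

lemma inv_smooth (i : Fin 3) : ∀ x : Fin 3 → ℝ, x ≠ 0 →
    ContDiffAt ℝ (⊤ : ℕ∞) (fun x : Fin 3 → ℝ => x i * (qq x)⁻¹) x := fun x hx =>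
  ContDiffAt.mul (by fun_prop) (qq_smooth.contDiffAt.inv (qq_pos hx).ne')

lemma inv_smooth' : ∀ x : Fin 3 → ℝ, x ≠ 0 →
    ContDiffAt ℝ (⊤ : ℕ∞) (fun x : Fin 3 → ℝ => (qq x)⁻¹) x := fun x hx =>
  (qq_smooth.contDiffAt.inv (qq_pos hx).ne')

lemma dd_inv (i : Fin 3) {x : Fin 3 → ℝ} (hx : x ≠ 0) :
    dd i (fun x : Fin 3 → ℝ => x i * (qq x)⁻¹) x = (qq x)⁻¹ - 2 * (x i)^2 * ((qq x)⁻¹)^2 := by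
  have h0 := (qq_pos hx).ne'
  have h1 := (hasDerivAt_inv h0).comp_hasFDerivAt x (qq_deriv x)
  have h2 := ((ContinuousLinearMap.proj i : (Fin 3 → ℝ) →L[ℝ] ℝ).hasFDerivAt (x := x)).mul h1
  unfold dd
  erw [h2.fderiv]
  simp [Pi.single_apply]
  field_simp
  ring

lemma ae_ne0 : ∀ᵐ x : Fin 3 → ℝ, x ≠ 0 := by
  simp [ae_iff]

lemma hardy (hf : GoodF f) :
    ∫ x, (qq x)⁻¹ * f x ^ 2 ≤ 4 * ∫ x, ∑ i, dd i f x ^ 2 := by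
  have H : ∀ i, GoodF (fun x => (x i * (qq x)⁻¹) * f x ^ 2) := fun i =>
    mulL (inv_smooth i) hf.sq
  have hS : GoodF (fun x => ∑ i, dd i (fun x => (x i * (qq x)⁻¹) * f x ^ 2) x) :=
    sum _ fun i => (H i).d i
  have h0 : ∫ x, ∑ i, dd i (fun x => (x i * (qq x)⁻¹) * f x ^ 2) x = 0 := by
    rw [integral_finsetSum _ fun i _ => ((H i).d i).integrable]
    simp [int_d _ (H _)]
  have hN : GoodF (fun x => ∑ i, dd i f x ^ 2) := sum _ fun i => (hf.d i).sq
  have hH : GoodF (fun x => (qq x)⁻¹ * f x ^ 2) := mulL inv_smooth' hf.sq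
  have key : ∫ x, (qq x)⁻¹ * f x ^ 2 ≤ ∫ x, (4 * (∑ i, dd i f x ^ 2) +
      2 * ∑ i, dd i (fun x => (x i * (qq x)⁻¹) * f x ^ 2) x) := by
    apply integral_mono_ae hH.integrable ((hN.const_mul 4).add (hS.const_mul 2)).integrable
    filter_upwards [ae_ne0] with x hx
    have hd : ∀ i, dd i (fun x => (x i * (qq x)⁻¹) * f x ^ 2) x =
        (x i * (qq x)⁻¹) * (2 * f x * dd i f x) +
        ((qq x)⁻¹ - 2 * (x i)^2 * ((qq x)⁻¹)^2) * f x ^ 2 := by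
      intro i
      rw [dd_mul i ((inv_smooth i x hx).differentiableAt (by simp)) (hf.sq.diff x), dd_inv i hx]
      congr 2
      have : (fun x => f x ^ 2) = fun x => f x * f x := by ext; ring
      rw [this, dd_mul i (hf.diff x) (hf.diff x)]
      ring
    simp only [hd]
    have hq : (x 0 ^ 2 + x 1 ^ 2 + x 2 ^ 2) * (qq x)⁻¹ = 1 := by
      have := (qq_pos hx).ne'
      have h2 : x 0 ^ 2 + x 1 ^ 2 + x 2 ^ 2 = qq x := by simp [qq, Fin.sum_univ_three]
      rw [h2]; field_simp
    simp only [Fin.sum_univ_three]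
    generalize (qq x)⁻¹ = p at *
    have e1 : 0 ≤ (2 * dd 0 f x + x 0 * p * f x) ^ 2 + (2 * dd 1 f x + x 1 * p * f x) ^ 2
      + (2 * dd 2 f x + x 2 * p * f x) ^ 2 := by positivity
    have e2 : (x 0 ^ 2 + x 1 ^ 2 + x 2 ^ 2) * p * (p * f x ^ 2) = p * f x ^ 2 := by
      rw [hq, one_mul]
    nlinarith [e1, e2]
  rw [integral_add (hN.const_mul 4).integrable (hS.const_mul 2).integrable,
    integral_const_mul, integral_const_mul, h0] at key
  simpa using key
end GoodF

lemma alg1 (B : Fin 3 → Fin 3 → ℝ) (x u : Fin 3 → ℝ) (p b : ℝ) (hp : 0 ≤ p)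
    (hq : (∑ i, x i ^ 2) * p = 1) (hb : b ^ 2 ≤ 1 / 4) :
    ∑ i, ∑ j, B i j ^ 2 + p * ∑ i, u i ^ 2 ≤
      2 * ∑ i, ∑ j, (B i j + b * x i * p * u j) ^ 2 + 3 / 2 * (p * ∑ i, u i ^ 2) := by
  have h1 : ∑ i, ∑ j, B i j ^ 2 ≤
      ∑ i, ∑ j, (2 * (B i j + b * x i * p * u j) ^ 2 + 2 * (b * x i * p * u j) ^ 2) := by
    refine Finset.sum_le_sum fun i _ => Finset.sum_le_sum fun j _ => ?_
    nlinarith [sq_nonneg (B i j + 2 * (b * x i * p * u j))]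
  have h2 : ∑ i, ∑ j, (b * x i * p * u j) ^ 2 = b ^ 2 * (p * ∑ i, u i ^ 2) := by
    calc _ = b ^ 2 * p * ((∑ i, x i ^ 2) * p) * ∑ i, u i ^ 2 := by
          simp only [Fin.sum_univ_three]; ring
      _ = _ := by rw [hq]; ring
  have h3 : 0 ≤ p * ∑ i, u i ^ 2 := by positivity
  simp only [Finset.sum_add_distrib, ← Finset.mul_sum] at h1
  rw [h2] at h1
  nlinarith

lemma young (K L P Q : ℝ) (hK : 1 < K) (hKL : (K - 1) * (L - 1) = 1) :
    (P + Q) ^ 2 ≤ K * P ^ 2 + L * Q ^ 2 := by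
  have h : 0 < K - 1 := by linarith
  have : 0 ≤ (K - 1) * (K * P ^ 2 + L * Q ^ 2 - (P + Q) ^ 2) := by
    have : (K - 1) * (K * P ^ 2 + L * Q ^ 2 - (P + Q) ^ 2) = ((K - 1) * P - Q) ^ 2 := by
      linear_combination Q ^ 2 * hKL
    rw [this]; positivity
  have := nonneg_of_mul_nonneg_right this h
  linarith

/-- sum of squares of divergence and curl of a matrix -/
noncomputable def dcM (B : Fin 3 → Fin 3 → ℝ) : ℝ :=
  (∑ i, B i i) ^ 2 + ∑ i, (∑ j, ∑ k, eps3 i j k * B j k) ^ 2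

lemma dcM_eq (B : Fin 3 → Fin 3 → ℝ) : dcM B = (B 0 0 + B 1 1 + B 2 2) ^ 2 +
    (B 1 2 - B 2 1) ^ 2 + (B 2 0 - B 0 2) ^ 2 + (B 0 1 - B 1 0) ^ 2 := by
  simp only [dcM, eps3, Fin.sum_univ_three]
  norm_num
  ring

lemma alg2 (B : Fin 3 → Fin 3 → ℝ) (x u : Fin 3 → ℝ) (p b K L : ℝ)
    (hq : (∑ i, x i ^ 2) * p = 1) (hK : 1 < K) (hKL : (K - 1) * (L - 1) = 1) :
    dcM (fun i j => B i j + b * x i * p * u j) ≤ K * dcM B + L * b ^ 2 * (p * ∑ i, u i ^ 2) := by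
  have h2 : b ^ 2 * (p * ∑ i, u i ^ 2) = dcM (fun i j => b * x i * p * u j) := by
    rw [dcM_eq]
    calc _ = b ^ 2 * p * ((∑ i, x i ^ 2) * p) * ∑ i, u i ^ 2 := by rw [hq]; ring
      _ = _ := by simp only [Fin.sum_univ_three]; ring
  rw [mul_assoc, h2, dcM_eq, dcM_eq, dcM_eq]
  have y := fun P Q => young K L P Q hK hKL
  have y1 := y (B 0 0 + B 1 1 + B 2 2) (b * x 0 * p * u 0 + b * x 1 * p * u 1 + b * x 2 * p * u 2)
  have y2 := y (B 1 2 - B 2 1) (b * x 1 * p * u 2 - b * x 2 * p * u 1)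
  have y3 := y (B 2 0 - B 0 2) (b * x 2 * p * u 0 - b * x 0 * p * u 2)
  have y4 := y (B 0 1 - B 1 0) (b * x 0 * p * u 1 - b * x 1 * p * u 0)
  refine le_trans (le_of_eq ?_) ((add_le_add (add_le_add (add_le_add y1 y2) y3) y4).trans
    (le_of_eq ?_)) <;> ring

lemma dcM_smul (w : ℝ) (B : Fin 3 → Fin 3 → ℝ) : dcM (fun i j => w * B i j) = w ^ 2 * dcM B := by
  rw [dcM_eq, dcM_eq]; ring

lemma dcM_good {F : Fin 3 → Fin 3 → (Fin 3 → ℝ) → ℝ} (h : ∀ i j, GoodF (F i j)) :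
    GoodF (fun x => dcM (fun i j => F i j x)) := by
  unfold dcM
  exact (GoodF.sum _ fun i => h i i).sq.add (GoodF.sum _ fun i =>
    (GoodF.sum _ fun j => GoodF.sum _ fun k => (h j k).const_mul _).sq)

lemma div_curl_id {η : Fin 3 → (Fin 3 → ℝ) → ℝ} (h : ∀ j, GoodF (η j)) :
    ∫ x, ∑ i, ∑ j, dd i (η j) x ^ 2 = ∫ x, dcM (fun i j => dd i (η j) x) := by
  have hp : ∀ i j k l, Integrable (fun x => dd i (η j) x * dd k (η l) x) := fun i j k l =>
    (((h j).d i).mul ((h l).d k)).integrable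
  have key : ∀ x, ∑ i, ∑ j, dd i (η j) x ^ 2 = dcM (fun i j => dd i (η j) x) +
      2 * ((dd 0 (η 1) x * dd 1 (η 0) x - dd 1 (η 1) x * dd 0 (η 0) x) +
      (dd 0 (η 2) x * dd 2 (η 0) x - dd 2 (η 2) x * dd 0 (η 0) x) +
      (dd 1 (η 2) x * dd 2 (η 1) x - dd 2 (η 2) x * dd 1 (η 1) x)) := by
    intro x
    rw [dcM_eq]
    simp only [Fin.sum_univ_three]
    ring
  have hi : ∀ i j, Integrable (fun x => dd i (η j) x * dd j (η i) x - dd j (η j) x * dd i (η i) x) :=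
    fun i j => (hp _ _ _ _).sub (hp _ _ _ _)
  have hz : ∀ i j, ∫ x, (dd i (η j) x * dd j (η i) x - dd j (η j) x * dd i (η i) x) = 0 := by
    intro i j
    rw [integral_sub (hp _ _ _ _) (hp _ _ _ _), GoodF.swap i j (h j) (h i), sub_self]
  simp_rw [key]
  have hi2 : Integrable (fun x =>
      (dd 0 (η 1) x * dd 1 (η 0) x - dd 1 (η 1) x * dd 0 (η 0) x) +
      (dd 0 (η 2) x * dd 2 (η 0) x - dd 2 (η 2) x * dd 0 (η 0) x)) := (hi 0 1).add (hi 0 2)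
  have hi3 : Integrable (fun x =>
      (dd 0 (η 1) x * dd 1 (η 0) x - dd 1 (η 1) x * dd 0 (η 0) x) +
      (dd 0 (η 2) x * dd 2 (η 0) x - dd 2 (η 2) x * dd 0 (η 0) x) +
      (dd 1 (η 2) x * dd 2 (η 1) x - dd 2 (η 2) x * dd 1 (η 1) x)) := hi2.add (hi 1 2)
  rw [integral_add (dcM_good fun i j => (h j).d i).integrable (hi3.const_mul 2),
    integral_const_mul, integral_add hi2 (hi 1 2), integral_add (hi 0 1) (hi 0 2)]
  simp [hz]

lemma rpow_smooth (c : ℝ) : ∀ x : Fin 3 → ℝ, x ≠ 0 →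
    ContDiffAt ℝ (⊤ : ℕ∞) (fun x : Fin 3 → ℝ => qq x ^ c) x := fun x hx =>
  qq_smooth.contDiffAt.rpow_const_of_ne (qq_pos hx).ne'

lemma dd_rpow (c : ℝ) (i : Fin 3) {x : Fin 3 → ℝ} (hx : x ≠ 0) :
    dd i (fun x => qq x ^ c) x = qq x ^ c * (2 * c * x i * (qq x)⁻¹) := by
  have h := (qq_deriv x).rpow_const (p := c) (Or.inl (qq_pos hx).ne')
  have h2 : (∑ i, (2 * x i) • (ContinuousLinearMap.proj i : (Fin 3 → ℝ) →L[ℝ] ℝ))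
      (Pi.single i 1) = 2 * x i := by simp [Pi.single_apply]
  unfold dd
  rw [h.fderiv, ContinuousLinearMap.smul_apply, h2, Real.rpow_sub_one (qq_pos hx).ne', smul_eq_mul]
  field_simp

lemma enorm_rpow (c : ℝ) (x : Fin 3 → ℝ) : enorm3 x ^ c = qq x ^ (c / 2) := by
  have h : 0 ≤ ∑ i, (x i) ^ 2 := by positivity
  unfold enorm3 qq
  rw [Real.sqrt_eq_rpow, ← Real.rpow_mul h]
  congr 1; ring

/-- Weighted div-curl estimate on `ℝ³`: for `s ∈ (1,3)` there is `C = C(s) > 0` such that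
`∫ (|x|^{s-2} |∇ξ|² + |x|^{s-4} |ξ|²) ≤ C ∫ |x|^{s-2} ((div ξ)² + |curl ξ|²)` for every
smooth vector field `ξ` compactly supported away from the origin. -/
theorem weighted_div_curl_estimate (s : ℝ) (hs1 : 1 < s) (hs3 : s < 3) :
    ∃ C > 0, ∀ ξ : (Fin 3 → ℝ) → Fin 3 → ℝ, ContDiff ℝ (⊤ : ℕ∞) ξ → HasCompactSupport ξ →
      (0 : Fin 3 → ℝ) ∉ tsupport ξ →
      ∫ x : Fin 3 → ℝ,
          (enorm3 x ^ (s - 2) * ∑ i, ∑ j, (pdc ξ i j x) ^ 2 +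
            enorm3 x ^ (s - 4) * ∑ i, (ξ x i) ^ 2) ≤
        C * ∫ x : Fin 3 → ℝ,
          enorm3 x ^ (s - 2) * ((div3 ξ x) ^ 2 + ∑ i, (curl3 ξ i x) ^ 2) := by
  set a := s - 2 with ha
  have ha2 : a ^ 2 < 1 := by
    have h1 : -1 < a := by rw [ha]; linarith
    have h2 : a < 1 := by rw [ha]; linarith
    nlinarith
  have h1a : 0 < 1 - a ^ 2 := by linarith
  have h1a' : 0 < 1 + a ^ 2 := by positivity
  refine ⟨16 * (1 + a ^ 2) / (1 - a ^ 2) ^ 2, by positivity, fun ξ hξ hc h0 => ?_⟩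
  have hu : ∀ j, GoodF (fun x => ξ x j) := by
    intro j
    refine ⟨by fun_prop, hc.comp_left (g := fun v : Fin 3 → ℝ => v j) rfl, ?_⟩
    have := notMem_tsupport_iff_eventuallyEq.mp h0
    filter_upwards [this] with x hx
    simp [hx]
  have hpdc : ∀ i j x, pdc ξ i j x = dd i (fun y => ξ y j) x := by
    intro i j x
    unfold pdc dd
    have hd : DifferentiableAt ℝ ξ x := (hξ.differentiable (by simp)) x
    rw [fderiv_apply hd]
    rfl
  have hη : ∀ j, GoodF (fun x => qq x ^ (a / 4) * ξ x j) := fun j =>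
    GoodF.mulL (rpow_smooth _) (hu j)
  have hA : ∀ i j x, x ≠ 0 → dd i (fun x => qq x ^ (a / 4) * ξ x j) x =
      qq x ^ (a / 4) * (pdc ξ i j x + (a / 2) * x i * (qq x)⁻¹ * ξ x j) := by
    intro i j x hx
    rw [GoodF.dd_mul i ((rpow_smooth _ x hx).differentiableAt (by simp)) ((hu j).diff x),
      dd_rpow _ _ hx, hpdc]
    ring
  have hw : ∀ x : Fin 3 → ℝ, x ≠ 0 → enorm3 x ^ a = (qq x ^ (a / 4)) ^ 2 := by
    intro x hx
    rw [enorm_rpow, ← Real.rpow_natCast, ← Real.rpow_mul (qq_pos hx).le]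
    congr 1; push_cast; ring
  have hw' : ∀ x : Fin 3 → ℝ, x ≠ 0 → enorm3 x ^ (s - 4) =
      (qq x ^ (a / 4)) ^ 2 * (qq x)⁻¹ := by
    intro x hx
    rw [← hw x hx, enorm_rpow, enorm_rpow, ← Real.rpow_neg_one, ← Real.rpow_add (qq_pos hx)]
    congr 1; rw [ha]; ring
  have hes : ∀ c : ℝ, ∀ x : Fin 3 → ℝ, x ≠ 0 →
      ContDiffAt ℝ (⊤ : ℕ∞) (fun x : Fin 3 → ℝ => enorm3 x ^ c) x := by
    intro c
    simp only [enorm_rpow]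
    exact rpow_smooth _
  have hq1 : ∀ x : Fin 3 → ℝ, x ≠ 0 → (∑ i, x i ^ 2) * (qq x)⁻¹ = 1 := fun x hx =>
    mul_inv_cancel₀ (qq_pos hx).ne'
  have hgp : ∀ i j, GoodF (pdc ξ i j) := fun i j => by
    have := (hu j).d i
    rwa [← funext (hpdc i j)] at this
  have hdc : ∀ x, (div3 ξ x) ^ 2 + ∑ i, (curl3 ξ i x) ^ 2 = dcM (fun i j => pdc ξ i j x) :=
    fun x => rfl
  simp only [hdc]
  have gD : GoodF (fun x => enorm3 x ^ a * dcM (fun i j => pdc ξ i j x)) :=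
    GoodF.mulL (hes _) (dcM_good hgp)
  have gL : GoodF (fun x => enorm3 x ^ a * ∑ i, ∑ j, (pdc ξ i j x) ^ 2 +
            enorm3 x ^ (s - 4) * ∑ i, (ξ x i) ^ 2) :=
    (GoodF.mulL (hes _) (GoodF.sum _ fun i => GoodF.sum _ fun j => (hgp i j).sq)).add
      (GoodF.mulL (hes _) (GoodF.sum _ fun i => (hu i).sq))
  have gN : GoodF (fun x => ∑ i, ∑ j, dd i (fun x => qq x ^ (a / 4) * ξ x j) x ^ 2) :=
    GoodF.sum _ fun i => GoodF.sum _ fun j => ((hη j).d i).sq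
  have gH : GoodF (fun x => ∑ j, (qq x)⁻¹ * (qq x ^ (a / 4) * ξ x j) ^ 2) :=
    GoodF.sum _ fun j => GoodF.mulL GoodF.inv_smooth' (hη j).sq
  have gA : GoodF (fun x => dcM (fun i j => dd i (fun x => qq x ^ (a / 4) * ξ x j) x)) :=
    dcM_good fun i j => (hη j).d i
  have hH : ∀ x, ∑ j, (qq x)⁻¹ * (qq x ^ (a / 4) * ξ x j) ^ 2 =
      (qq x ^ (a / 4)) ^ 2 * ((qq x)⁻¹ * ∑ j, ξ x j ^ 2) := by
    intro x
    simp only [Fin.sum_univ_three]; ring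
  -- Hardy
  have I1 : ∫ x, ∑ j, (qq x)⁻¹ * (qq x ^ (a / 4) * ξ x j) ^ 2 ≤
      4 * ∫ x, ∑ i, ∑ j, dd i (fun x => qq x ^ (a / 4) * ξ x j) x ^ 2 := by
    simp_rw [fun x => Finset.sum_comm (s := Finset.univ) (t := Finset.univ)
      (f := fun i j => dd i (fun x => qq x ^ (a / 4) * ξ x j) x ^ 2)]
    rw [integral_finsetSum _ fun j _ => (GoodF.mulL GoodF.inv_smooth' (hη j).sq).integrable,
      integral_finsetSum _ fun j _ => (GoodF.sum _ fun i => ((hη j).d i).sq).integrable,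
      Finset.mul_sum]
    exact Finset.sum_le_sum fun j _ => (hη j).hardy
  have I2 := div_curl_id hη
  have I3 : ∫ x, dcM (fun i j => dd i (fun x => qq x ^ (a / 4) * ξ x j) x) ≤
      ∫ x, (2 / (1 - a ^ 2) * (enorm3 x ^ a * dcM (fun i j => pdc ξ i j x)) +
        2 / (1 + a ^ 2) * (a / 2) ^ 2 * ∑ j, (qq x)⁻¹ * (qq x ^ (a / 4) * ξ x j) ^ 2) := by
    apply integral_mono_ae gA.integrable ((gD.const_mul _).add (gH.const_mul _)).integrable
    filter_upwards [GoodF.ae_ne0] with x hx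
    simp only [hA _ _ x hx]
    rw [dcM_smul, hH, hw x hx]
    have := alg2 (fun i j => pdc ξ i j x) x (ξ x) (qq x)⁻¹ (a / 2) (2 / (1 - a ^ 2))
      (2 / (1 + a ^ 2)) (hq1 x hx) (by rw [lt_div_iff₀ h1a]; nlinarith [sq_nonneg a])
      (by field_simp; ring)
    refine (mul_le_mul_of_nonneg_left this (sq_nonneg _)).trans (le_of_eq ?_)
    ring
  have I4 : ∫ x, (enorm3 x ^ a * ∑ i, ∑ j, (pdc ξ i j x) ^ 2 +
            enorm3 x ^ (s - 4) * ∑ i, (ξ x i) ^ 2) ≤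
      ∫ x, (2 * (∑ i, ∑ j, dd i (fun x => qq x ^ (a / 4) * ξ x j) x ^ 2) +
        3 / 2 * ∑ j, (qq x)⁻¹ * (qq x ^ (a / 4) * ξ x j) ^ 2) := by
    apply integral_mono_ae gL.integrable ((gN.const_mul _).add (gH.const_mul _)).integrable
    filter_upwards [GoodF.ae_ne0] with x hx
    simp only [hA _ _ x hx]
    rw [hH, hw x hx, hw' x hx]
    have := alg1 (fun i j => pdc ξ i j x) x (ξ x) (qq x)⁻¹ (a / 2)
      (inv_nonneg.mpr (qq_pos hx).le) (hq1 x hx) (by nlinarith)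
    have := mul_le_mul_of_nonneg_left this (sq_nonneg (qq x ^ (a / 4)))
    refine (le_of_eq ?_).trans (this.trans (le_of_eq ?_))
    · ring
    · simp only [mul_pow, ← Finset.mul_sum]
      ring
  rw [integral_add (gD.const_mul _).integrable (gH.const_mul _).integrable,
    integral_const_mul, integral_const_mul, ← I2] at I3
  rw [integral_add (gN.const_mul _).integrable (gH.const_mul _).integrable,
    integral_const_mul, integral_const_mul] at I4
  refine I4.trans ?_
  generalize (∫ x, ∑ i, ∑ j, dd i (fun x => qq x ^ (a / 4) * ξ x j) x ^ 2) = N at *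
  generalize (∫ x, ∑ j, (qq x)⁻¹ * (qq x ^ (a / 4) * ξ x j) ^ 2) = H at *
  generalize (∫ x, enorm3 x ^ a * dcM (fun i j => pdc ξ i j x)) = D at *
  have J1 : N ≤ 2 / (1 - a ^ 2) * D + 2 / (1 + a ^ 2) * (a / 2) ^ 2 * (4 * N) :=
    I3.trans (by gcongr)
  have J2 : (1 - a ^ 2) / (1 + a ^ 2) * N ≤ 2 / (1 - a ^ 2) * D := by
    have : (1 - a ^ 2) / (1 + a ^ 2) * N = N - 2 / (1 + a ^ 2) * (a / 2) ^ 2 * (4 * N) := by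
      field_simp; ring
    linarith
  have J3 : N ≤ 2 * (1 + a ^ 2) / (1 - a ^ 2) ^ 2 * D := by
    have := mul_le_mul_of_nonneg_left J2 (div_pos h1a' h1a).le
    refine (le_of_eq ?_).trans (this.trans (le_of_eq ?_)) <;> field_simp
  calc 2 * N + 3 / 2 * H ≤ 8 * N := by linarith
    _ ≤ 8 * (2 * (1 + a ^ 2) / (1 - a ^ 2) ^ 2 * D) := by linarith
    _ = _ := by ring
end

section
/- Let W be a Weyl field on ℝ⁴, i.e. a smooth map assigning to each point p ∈ ℝ⁴ a Weyl tensor W(p), satisfying the vacuum Bianchi equations: Σ_{α,μ} η^{αμ} ∂_μ W_{αβγδ} = 0 for all β,γ,δ, and ∂_λ W_{αβγδ} + ∂_α W_{βλγδ} + ∂_β W_{λαγδ} = 0 for all indices. Then the Bel-Robinson tensor field Q (defined pointwise from W) is divergence-free: Σ_{α,μ} η^{αμ} ∂_μ Q_{αβγδ} = 0 on all of ℝ⁴, for all β, γ, δ. -/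
/-- The Minkowski metric `η` on `ℝ⁴` (and its inverse, which has the same components):
`η_{00} = -1`, `η_{11} = η_{22} = η_{33} = 1`, off-diagonal components zero. -/
noncomputable def eta (μ ν : Fin 4) : ℝ :=
  if μ = ν then (if μ = 0 then -1 else 1) else 0

/-- The Levi-Civita symbol on four indices, totally antisymmetric with `ε_{0123} = 1`. -/
noncomputable def eps4 (i j k l : Fin 4) : ℝ :=
  ((((j : ℕ) : ℝ) - ((i : ℕ) : ℝ)) * (((k : ℕ) : ℝ) - ((i : ℕ) : ℝ)) *
    (((l : ℕ) : ℝ) - ((i : ℕ) : ℝ)) * (((k : ℕ) : ℝ) - ((j : ℕ) : ℝ)) *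
    (((l : ℕ) : ℝ) - ((j : ℕ) : ℝ)) * (((l : ℕ) : ℝ) - ((k : ℕ) : ℝ))) / 12

/-- A Weyl tensor on `(ℝ⁴, η)`: antisymmetric in the first and last pairs of indices,
symmetric under exchange of the pairs, satisfying the first Bianchi identity, and
trace-free. -/
def IsWeylTensor (W : Fin 4 → Fin 4 → Fin 4 → Fin 4 → ℝ) : Prop :=
  (∀ α β γ δ, W α β γ δ = -W β α γ δ) ∧
  (∀ α β γ δ, W α β γ δ = -W α β δ γ) ∧
  (∀ α β γ δ, W α β γ δ = W γ δ α β) ∧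
  (∀ α β γ δ, W α β γ δ + W α γ δ β + W α δ β γ = 0) ∧
  (∀ α β, ∑ μ, ∑ ν, eta μ ν * W μ α ν β = 0)

/-- The Hodge dual `(*W)_{αβγδ} = (1/2) Σ η^{ρμ} η^{σν} ε_{αβρσ} W_{μνγδ}`. -/
noncomputable def hodge (W : Fin 4 → Fin 4 → Fin 4 → Fin 4 → ℝ)
    (α β γ δ : Fin 4) : ℝ :=
  (1 / 2) * ∑ μ, ∑ ν, ∑ ρ, ∑ σ, eta ρ μ * eta σ ν * eps4 α β ρ σ * W μ ν γ δ

/-- The Bel-Robinson tensor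
`Q_{αβγδ} = Σ η^{μρ} η^{νσ} (W_{αμβν} W_{γρδσ} + (*W)_{αμβν} (*W)_{γρδσ})`. -/
noncomputable def belRobinson (W : Fin 4 → Fin 4 → Fin 4 → Fin 4 → ℝ)
    (α β γ δ : Fin 4) : ℝ :=
  ∑ μ, ∑ ν, ∑ ρ, ∑ σ, eta μ ρ * eta ν σ *
    (W α μ β ν * W γ ρ δ σ + hodge W α μ β ν * hodge W γ ρ δ σ)

/-- The partial derivative `∂_μ f` on `ℝ⁴`. -/
noncomputable def pd4 (f : (Fin 4 → ℝ) → ℝ) (μ : Fin 4) (p : Fin 4 → ℝ) : ℝ :=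
  fderiv ℝ f p (Pi.single μ 1)

noncomputable def hodge2 (F : Fin 4 → Fin 4 → ℝ) (α β : Fin 4) : ℝ :=
  (1 / 2) * ∑ μ, ∑ ν, ∑ ρ, ∑ σ, eta ρ μ * eta σ ν * eps4 α β ρ σ * F μ ν

noncomputable def sgn4 (μ : Fin 4) : ℝ := if μ = 0 then -1 else 1

lemma sum_eta (α : Fin 4) (f : Fin 4 → ℝ) : ∑ μ, eta α μ * f μ = sgn4 α * f α := by
  simp [eta, sgn4]

lemma hodge2_eq (F : Fin 4 → Fin 4 → ℝ) (α β : Fin 4) :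
    hodge2 F α β = (1 / 2) * ∑ μ, ∑ ν, sgn4 μ * sgn4 ν * eps4 α β μ ν * F μ ν := by
  unfold hodge2
  congr 1
  refine Finset.sum_congr rfl fun μ _ => Finset.sum_congr rfl fun ν _ => ?_
  simp [eta, sgn4]

/-- Polarised Maxwell stress tensor. -/
noncomputable def stress (F G : Fin 4 → Fin 4 → ℝ) (α γ : Fin 4) : ℝ :=
  ∑ μ, sgn4 μ * (F α μ * G γ μ + hodge2 F α μ * hodge2 G γ μ)

lemma belRobinson_eq (W : Fin 4 → Fin 4 → Fin 4 → Fin 4 → ℝ) (α β γ δ : Fin 4) :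
    belRobinson W α β γ δ = ∑ ν, sgn4 ν *
      stress (fun a b => W a b β ν) (fun a b => W a b δ ν) α γ := by
  have h : ∀ a b c d, hodge W a b c d = hodge2 (fun x y => W x y c d) a b :=
    fun _ _ _ _ => rfl
  simp only [belRobinson, h, stress, Finset.mul_sum]
  rw [Finset.sum_comm]
  refine Finset.sum_congr rfl fun ν _ => Finset.sum_congr rfl fun μ _ => ?_
  simp [eta, sgn4]
  split_ifs <;> ring

lemma hodge2_table (F : Fin 4 → Fin 4 → ℝ) (h : ∀ a b, F a b = -F b a) :
    (hodge2 F 0 1 = F 2 3 ∧ hodge2 F 0 2 = - F 1 3 ∧ hodge2 F 0 3 = F 1 2 ∧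
      hodge2 F 1 2 = - F 0 3 ∧ hodge2 F 1 3 = F 0 2 ∧ hodge2 F 2 3 = - F 0 1) ∧
    (hodge2 F 1 0 = - F 2 3 ∧ hodge2 F 2 0 = F 1 3 ∧ hodge2 F 3 0 = - F 1 2 ∧
      hodge2 F 2 1 = F 0 3 ∧ hodge2 F 3 1 = - F 0 2 ∧ hodge2 F 3 2 = F 0 1) ∧
    (hodge2 F 0 0 = 0 ∧ hodge2 F 1 1 = 0 ∧ hodge2 F 2 2 = 0 ∧ hodge2 F 3 3 = 0) := by
  have h1 := h 1 0
  have h2 := h 2 0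
  have h3 := h 3 0
  have h4 := h 2 1
  have h5 := h 3 1
  have h6 := h 3 2
  refine ⟨⟨?_, ?_, ?_, ?_, ?_, ?_⟩, ⟨?_, ?_, ?_, ?_, ?_, ?_⟩, ⟨?_, ?_, ?_, ?_⟩⟩ <;>
  · simp [hodge2_eq, Fin.sum_univ_four, sgn4, eps4, h1, h2, h3, h4, h5, h6]
    try ring

lemma maxwell_half (F : Fin 4 → Fin 4 → ℝ) (D : Fin 4 → Fin 4 → Fin 4 → ℝ)
    (hF : ∀ a b, F a b = -F b a) (hD : ∀ l a b, D l a b = -D l b a)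
    (hdiv : ∀ b, ∑ a, sgn4 a * D a a b = 0)
    (hcyc : ∀ l a b, D l a b + D a b l + D b l a = 0) (γ : Fin 4) :
    ∑ α, sgn4 α * stress (D α) F α γ = 0 ∧ ∑ α, sgn4 α * stress F (D α) α γ = 0 := by
  obtain ⟨⟨t1, t2, t3, t4, t5, t6⟩, ⟨u1, u2, u3, u4, u5, u6⟩, v0, v1, v2, v3⟩ := hodge2_table F hF
  have T := fun l => hodge2_table (D l) (hD l)
  have F0 : ∀ a, F a a = 0 := fun a => by linarith [hF a a]
  have D0 : ∀ l a, D l a a = 0 := fun l a => by linarith [hD l a a]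
  have h1 := hF 1 0
  have h2 := hF 2 0
  have h3 := hF 3 0
  have h4 := hF 2 1
  have h5 := hF 3 1
  have h6 := hF 3 2
  have d1 := fun l => hD l 1 0
  have d2 := fun l => hD l 2 0
  have d3 := fun l => hD l 3 0
  have d4 := fun l => hD l 2 1
  have d5 := fun l => hD l 3 1
  have d6 := fun l => hD l 3 2
  have c0 := hcyc 1 2 3
  have c1 := hcyc 0 2 3
  have c2 := hcyc 0 1 3
  have c3 := hcyc 0 1 2
  have e0 := hdiv 0
  have e1 := hdiv 1
  have e2 := hdiv 2
  have e3 := hdiv 3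
  simp [Fin.sum_univ_four, sgn4, D0, d1, d2, d3, d4, d5, d6] at c0 c1 c2 c3 e0 e1 e2 e3
  have c0' : D 1 2 3 = D 2 1 3 - D 3 1 2 := by linarith
  have c1' : D 0 2 3 = D 2 0 3 - D 3 0 2 := by linarith
  have c2' : D 0 1 3 = D 1 0 3 - D 3 0 1 := by linarith
  have c3' : D 0 1 2 = D 1 0 2 - D 2 0 1 := by linarith
  have e0' : D 1 0 1 = - D 2 0 2 - D 3 0 3 := by linarith
  have e1' : D 0 0 1 = - D 2 1 2 - D 3 1 3 := by linarith
  have e2' : D 0 0 2 = D 1 1 2 - D 3 2 3 := by linarith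
  have e3' : D 0 0 3 = D 1 1 3 + D 2 2 3 := by linarith
  constructor <;> fin_cases γ <;>
  · simp [Fin.sum_univ_four, stress, sgn4, T, F0, D0, d1, d2, d3, d4, d5, d6, h1, h2, h3, h4, h5,
      h6, t1, t2, t3, t4, t5, t6, u1, u2, u3, u4, u5, u6, v0, v1, v2, v3]
    simp only [c0', c1', c2', c3', e0', e1', e2', e3']
    ring

lemma hasFDerivAt_hodge2 {F : (Fin 4 → ℝ) → Fin 4 → Fin 4 → ℝ} {p : Fin 4 → ℝ}
    (hF : ∀ a b, DifferentiableAt ℝ (fun q => F q a b) p) (a b : Fin 4) :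
    DifferentiableAt ℝ (fun q => hodge2 (F q) a b) p ∧
    ∀ m, pd4 (fun q => hodge2 (F q) a b) m p =
      hodge2 (fun x y => pd4 (fun q => F q x y) m p) a b := by
  have key : HasFDerivAt (fun q => hodge2 (F q) a b)
      ((1 / 2 : ℝ) • ∑ μ, ∑ ν, (sgn4 μ * sgn4 ν * eps4 a b μ ν) •
        fderiv ℝ (fun q => F q μ ν) p) p := by
    simp only [hodge2_eq]
    refine HasFDerivAt.const_mul (HasFDerivAt.fun_sum fun μ _ => HasFDerivAt.fun_sum fun ν _ => ?_) _
    exact (hF μ ν).hasFDerivAt.const_mul _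
  refine ⟨key.differentiableAt, fun m => ?_⟩
  rw [pd4, key.fderiv, hodge2_eq]
  simp [pd4, ContinuousLinearMap.sum_apply]

lemma pd4_stress {F G : (Fin 4 → ℝ) → Fin 4 → Fin 4 → ℝ} {p : Fin 4 → ℝ}
    (hF : ∀ a b, DifferentiableAt ℝ (fun q => F q a b) p)
    (hG : ∀ a b, DifferentiableAt ℝ (fun q => G q a b) p) (α γ : Fin 4) :
    DifferentiableAt ℝ (fun q => stress (F q) (G q) α γ) p ∧
    ∀ m, pd4 (fun q => stress (F q) (G q) α γ) m p =
      stress (fun x y => pd4 (fun q => F q x y) m p) (G p) α γ +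
      stress (F p) (fun x y => pd4 (fun q => G q x y) m p) α γ := by
  have key : HasFDerivAt (fun q => stress (F q) (G q) α γ) _ p :=
    HasFDerivAt.fun_sum (u := Finset.univ) fun μ _ =>
    ((((hF α μ).hasFDerivAt.mul (hG γ μ).hasFDerivAt).add
      ((hasFDerivAt_hodge2 hF α μ).1.hasFDerivAt.mul
        (hasFDerivAt_hodge2 hG γ μ).1.hasFDerivAt)).const_mul (sgn4 μ))
  refine ⟨key.differentiableAt, fun m => ?_⟩
  rw [pd4, key.fderiv]
  simp only [stress, ← (hasFDerivAt_hodge2 hF _ _).2, ← (hasFDerivAt_hodge2 hG _ _).2]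
  rw [← Finset.sum_add_distrib, ContinuousLinearMap.sum_apply]
  refine Finset.sum_congr rfl fun μ _ => ?_
  simp [pd4]
  ring

/-- If `W` is a smooth Weyl field on `ℝ⁴` satisfying the vacuum Bianchi equations, then
its Bel-Robinson tensor field is divergence-free:
`Σ_{α,μ} η^{αμ} ∂_μ Q_{αβγδ} = 0`. -/
theorem belRobinson_divergence_free
    (W : (Fin 4 → ℝ) → Fin 4 → Fin 4 → Fin 4 → Fin 4 → ℝ)
    (hSmooth : ∀ α β γ δ : Fin 4, ContDiff ℝ (⊤ : ℕ∞) fun p => W p α β γ δ)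
    (hWeyl : ∀ p, IsWeylTensor (W p))
    (hBianchiDiv : ∀ (p : Fin 4 → ℝ) (β γ δ : Fin 4),
      ∑ α, ∑ μ, eta α μ * pd4 (fun q => W q α β γ δ) μ p = 0)
    (hBianchiFull : ∀ (p : Fin 4 → ℝ) (l α β γ δ : Fin 4),
      pd4 (fun q => W q α β γ δ) l p + pd4 (fun q => W q β l γ δ) α p +
        pd4 (fun q => W q l α γ δ) β p = 0) :
    ∀ (p : Fin 4 → ℝ) (β γ δ : Fin 4),
      ∑ α, ∑ μ, eta α μ * pd4 (fun q => belRobinson (W q) α β γ δ) μ p = 0 := by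
  intro p β γ δ
  have hdiff : ∀ c d a b, DifferentiableAt ℝ (fun q => W q a b c d) p := fun c d a b =>
    (hSmooth a b c d).contDiffAt.differentiableAt (by simp)
  have hanti : ∀ c d l a b, pd4 (fun q => W q a b c d) l p = - pd4 (fun q => W q b a c d) l p := by
    intro c d l a b
    have : (fun q => W q a b c d) = fun q => - W q b a c d := funext fun q => (hWeyl q).1 a b c d
    rw [this]
    simp [pd4, fderiv_fun_neg]
  have hdv : ∀ c d b, ∑ a, sgn4 a * pd4 (fun q => W q a b c d) a p = 0 := by
    intro c d b
    have := hBianchiDiv p b c d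
    simpa only [sum_eta] using this
  have M := fun c d c' d' => maxwell_half (fun a b => W p a b c d)
    (fun l a b => pd4 (fun q => W q a b c' d') l p) (fun a b => (hWeyl p).1 a b c d)
    (hanti c' d') (hdv c' d') (fun l a b => hBianchiFull p l a b c' d') γ
  have hpd : ∀ α, pd4 (fun q => belRobinson (W q) α β γ δ) α p = ∑ ν, sgn4 ν *
      (stress (fun x y => pd4 (fun q => W q x y β ν) α p) (fun a b => W p a b δ ν) α γ +
       stress (fun a b => W p a b β ν) (fun x y => pd4 (fun q => W q x y δ ν) α p) α γ) := by
    intro α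
    simp only [belRobinson_eq]
    have P := fun ν => pd4_stress (F := fun q a b => W q a b β ν) (G := fun q a b => W q a b δ ν)
      (hdiff β ν) (hdiff δ ν) α γ
    have key := HasFDerivAt.fun_sum (u := Finset.univ) fun ν _ =>
      ((P ν).1.hasFDerivAt.const_mul (sgn4 ν))
    rw [pd4, key.fderiv, ContinuousLinearMap.sum_apply]
    refine Finset.sum_congr rfl fun ν _ => ?_
    rw [← (P ν).2 α]
    simp [pd4]
  simp only [sum_eta, hpd, Finset.mul_sum]
  rw [Finset.sum_comm]
  refine Finset.sum_eq_zero fun ν _ => ?_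
  have h1 := (M δ ν β ν).1
  have h2 := (M β ν δ ν).2
  have h3 := congrArg (fun x => sgn4 ν * x) (congrArg₂ (· + ·) h1 h2)
  simp only [← Finset.sum_add_distrib, Finset.mul_sum, add_zero, mul_zero] at h3
  rw [← h3]
  refine Finset.sum_congr rfl fun α _ => ?_
  ring
end

section
/- Let W be a Weyl field on ℝ⁴ (a smooth map assigning to each point a Weyl tensor and satisfying the vacuum Bianchi equations Σ_{α,μ} η^{αμ} ∂_μ W_{αβγδ} = 0 and ∂_λ W_{αβγδ} + ∂_α W_{βλγδ} + ∂_β W_{λαγδ} = 0), let Q be its Bel-Robinson tensor field, let T = (1,0,0,0), and let K₀ be the conformal Morawetz field with components K₀⁰ = t² + |x|², K₀ⁱ = 2t xⁱ. Then the energy current P_α := Σ_{β,γ,δ} Q_{αβγδ} K₀^β T^γ T^δ is divergence-free: Σ_{α,μ} η^{αμ} ∂_μ P_α = 0 on all of ℝ⁴. -/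
/-- The timelike multiplier `T = (1,0,0,0)`. -/
noncomputable def Tvec (μ : Fin 4) : ℝ := if μ = 0 then 1 else 0

/-- The conformal Morawetz vector field `K₀` on Minkowski space, with components
`K₀⁰ = t² + |x|²` and `K₀ⁱ = 2 t xⁱ`; here `t = p 0`. -/
noncomputable def morawetzK (p : Fin 4 → ℝ) (μ : Fin 4) : ℝ :=
  if μ = 0 then (p 0) ^ 2 + ((p 1) ^ 2 + (p 2) ^ 2 + (p 3) ^ 2) else 2 * p 0 * p μ

/-- The energy current `P_α = Σ Q_{αβγδ} K₀^β T^γ T^δ`. -/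
noncomputable def morawetzCurrent (W : (Fin 4 → ℝ) → Fin 4 → Fin 4 → Fin 4 → Fin 4 → ℝ)
    (α : Fin 4) (p : Fin 4 → ℝ) : ℝ :=
  ∑ β, ∑ γ, ∑ δ, belRobinson (W p) α β γ δ * morawetzK p β * Tvec γ * Tvec δ

set_option linter.unusedSimpArgs false

theorem weyl_comps (W : Fin 4 → Fin 4 → Fin 4 → Fin 4 → ℝ) (h : IsWeylTensor W) :
    (W 0 3 0 3 = -W 0 1 0 1 - W 0 2 0 2 ∧ W 0 2 2 3 = - W 0 1 1 3 ∧
     W 0 3 1 2 = - W 0 1 2 3 + W 0 2 1 3 ∧ W 0 3 2 3 = W 0 1 1 2 ∧ W 0 3 1 3 = - W 0 2 1 2) ∧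
    (W 1 2 1 2 = W 0 1 0 1 + W 0 2 0 2 ∧ W 1 3 1 3 = - W 0 2 0 2 ∧ W 2 3 2 3 = - W 0 1 0 1 ∧
     W 1 3 2 3 = W 0 1 0 2 ∧ W 1 2 2 3 = - W 0 1 0 3 ∧ W 1 2 1 3 = W 0 2 0 3) := by
  obtain ⟨h1, h2, h3, h4, h5⟩ := h
  simp only [Fin.sum_univ_four, eta] at h5
  have z1 : ∀ a c d, W a a c d = 0 := fun a c d => by linarith [h1 a a c d]
  have z2 : ∀ a b c, W a b c c = 0 := fun a b c => by linarith [h2 a b c c]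
  have r1 : ∀ c d, W 1 0 c d = -W 0 1 c d := fun c d => h1 _ _ _ _
  have r2 : ∀ c d, W 2 0 c d = -W 0 2 c d := fun c d => h1 _ _ _ _
  have r3 : ∀ c d, W 3 0 c d = -W 0 3 c d := fun c d => h1 _ _ _ _
  have r4 : ∀ c d, W 2 1 c d = -W 1 2 c d := fun c d => h1 _ _ _ _
  have r5 : ∀ c d, W 3 1 c d = -W 1 3 c d := fun c d => h1 _ _ _ _
  have r6 : ∀ c d, W 3 2 c d = -W 2 3 c d := fun c d => h1 _ _ _ _
  have s1 : ∀ c d, W c d 1 0 = -W c d 0 1 := fun c d => h2 _ _ _ _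
  have s2 : ∀ c d, W c d 2 0 = -W c d 0 2 := fun c d => h2 _ _ _ _
  have s3 : ∀ c d, W c d 3 0 = -W c d 0 3 := fun c d => h2 _ _ _ _
  have s4 : ∀ c d, W c d 2 1 = -W c d 1 2 := fun c d => h2 _ _ _ _
  have s5 : ∀ c d, W c d 3 1 = -W c d 1 3 := fun c d => h2 _ _ _ _
  have s6 : ∀ c d, W c d 3 2 = -W c d 2 3 := fun c d => h2 _ _ _ _
  have t00 := h5 0 0
  have t01 := h5 0 1
  have t02 := h5 0 2
  have t03 := h5 0 3
  have t11 := h5 1 1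
  have t12 := h5 1 2
  have t13 := h5 1 3
  have t22 := h5 2 2
  have t23 := h5 2 3
  have t33 := h5 3 3
  have b := h4 0 1 2 3
  simp [z1, z2, r1, r2, r3, r4, r5, r6, s1, s2, s3, s4, s5, s6] at t00 t01 t02 t03 t11 t12 t13 t22 t23 t33 b
  have x1 := h3 0 1 1 2
  have x2 := h3 0 1 1 3
  have x3 := h3 0 1 2 3
  have x4 := h3 0 2 1 2
  have x5 := h3 0 2 1 3
  have x6 := h3 0 2 2 3
  have x7 := h3 0 3 1 2
  have x8 := h3 0 3 1 3
  have x9 := h3 0 3 2 3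
  have y1 := h3 1 2 1 3
  have y2 := h3 1 2 2 3
  have y3 := h3 1 3 2 3
  refine ⟨⟨?_, ?_, ?_, ?_, ?_⟩, ?_, ?_, ?_, ?_, ?_, ?_⟩ <;> linarith

/-- All components expressed through ten independent ones. -/
structure WeylRules (W : Fin 4 → Fin 4 → Fin 4 → Fin 4 → ℝ) : Prop where
  z1 : ∀ a c d, W a a c d = 0
  z2 : ∀ a b c, W a b c c = 0
  r1 : ∀ c d, W 1 0 c d = -W 0 1 c d
  r2 : ∀ c d, W 2 0 c d = -W 0 2 c d
  r3 : ∀ c d, W 3 0 c d = -W 0 3 c d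
  r4 : ∀ c d, W 2 1 c d = -W 1 2 c d
  r5 : ∀ c d, W 3 1 c d = -W 1 3 c d
  r6 : ∀ c d, W 3 2 c d = -W 2 3 c d
  s1 : ∀ c d, W c d 1 0 = -W c d 0 1
  s2 : ∀ c d, W c d 2 0 = -W c d 0 2
  s3 : ∀ c d, W c d 3 0 = -W c d 0 3
  s4 : ∀ c d, W c d 2 1 = -W c d 1 2
  s5 : ∀ c d, W c d 3 1 = -W c d 1 3
  s6 : ∀ c d, W c d 3 2 = -W c d 2 3
  c1 : W 0 3 0 3 = -W 0 1 0 1 - W 0 2 0 2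
  c2 : W 0 2 2 3 = - W 0 1 1 3
  c3 : W 0 3 1 2 = - W 0 1 2 3 + W 0 2 1 3
  c4 : W 0 3 2 3 = W 0 1 1 2
  c5 : W 0 3 1 3 = - W 0 2 1 2
  d1 : W 1 2 1 2 = W 0 1 0 1 + W 0 2 0 2
  d2 : W 1 3 1 3 = - W 0 2 0 2
  d3 : W 2 3 2 3 = - W 0 1 0 1
  d4 : W 1 3 2 3 = W 0 1 0 2
  d5 : W 1 2 2 3 = - W 0 1 0 3
  d6 : W 1 2 1 3 = W 0 2 0 3
  e1 : W 0 2 0 1 = W 0 1 0 2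
  e2 : W 0 3 0 1 = W 0 1 0 3
  e3 : W 0 3 0 2 = W 0 2 0 3
  f1 : ∀ a, W 1 2 0 a = W 0 a 1 2
  f2 : ∀ a, W 1 3 0 a = W 0 a 1 3
  f3 : ∀ a, W 2 3 0 a = W 0 a 2 3
  g1 : W 2 3 1 3 = W 0 1 0 2
  g2 : W 2 3 1 2 = - W 0 1 0 3
  g3 : W 1 3 1 2 = W 0 2 0 3

theorem weyl_rules (W : Fin 4 → Fin 4 → Fin 4 → Fin 4 → ℝ) (h : IsWeylTensor W) :
    WeylRules W := by
  obtain ⟨⟨c1, c2, c3, c4, c5⟩, d1, d2, d3, d4, d5, d6⟩ := weyl_comps W h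
  obtain ⟨h1, h2, h3, h4, h5⟩ := h
  exact
  { z1 := fun a c d => by linarith [h1 a a c d]
    z2 := fun a b c => by linarith [h2 a b c c]
    r1 := fun c d => h1 _ _ _ _
    r2 := fun c d => h1 _ _ _ _
    r3 := fun c d => h1 _ _ _ _
    r4 := fun c d => h1 _ _ _ _
    r5 := fun c d => h1 _ _ _ _
    r6 := fun c d => h1 _ _ _ _
    s1 := fun c d => h2 _ _ _ _
    s2 := fun c d => h2 _ _ _ _
    s3 := fun c d => h2 _ _ _ _
    s4 := fun c d => h2 _ _ _ _
    s5 := fun c d => h2 _ _ _ _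
    s6 := fun c d => h2 _ _ _ _
    c1 := c1
    c2 := c2
    c3 := c3
    c4 := c4
    c5 := c5
    d1 := d1
    d2 := d2
    d3 := d3
    d4 := d4
    d5 := d5
    d6 := d6
    e1 := h3 _ _ _ _
    e2 := h3 _ _ _ _
    e3 := h3 _ _ _ _
    f1 := fun a => h3 _ _ _ _
    f2 := fun a => h3 _ _ _ _
    f3 := fun a => h3 _ _ _ _
    g1 := by rw [h3, d4]
    g2 := by rw [h3, d5]
    g3 := by rw [h3, d6] }

theorem hodge_eq (W : Fin 4 → Fin 4 → Fin 4 → Fin 4 → ℝ) (α β γ δ : Fin 4) :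
    hodge W α β γ δ =
      (1 / 2) * ∑ ρ, ∑ σ, eta ρ ρ * eta σ σ * eps4 α β ρ σ * W ρ σ γ δ := by
  unfold hodge
  congr 1
  refine Finset.sum_congr rfl fun μ _ => Finset.sum_congr rfl fun ν _ => ?_
  rw [Finset.sum_eq_single μ, Finset.sum_eq_single ν]
  · intro b _ hb; simp [eta, hb]
  · simp
  · intro b _ hb; simp [eta, hb]
  · simp

theorem hodge_comps (W : Fin 4 → Fin 4 → Fin 4 → Fin 4 → ℝ) (h : WeylRules W) (c d : Fin 4) :
    (∀ a, hodge W a a c d = 0) ∧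
    (hodge W 0 1 c d = W 2 3 c d ∧ hodge W 0 2 c d = -W 1 3 c d ∧ hodge W 0 3 c d = W 1 2 c d) ∧
    (hodge W 1 0 c d = -W 2 3 c d ∧ hodge W 2 0 c d = W 1 3 c d ∧ hodge W 3 0 c d = -W 1 2 c d) ∧
    (hodge W 2 3 c d = -W 0 1 c d ∧ hodge W 1 3 c d = W 0 2 c d ∧ hodge W 1 2 c d = -W 0 3 c d) ∧
    (hodge W 3 2 c d = W 0 1 c d ∧ hodge W 3 1 c d = -W 0 2 c d ∧ hodge W 2 1 c d = W 0 3 c d) := by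
  refine ⟨fun a => by simp [hodge_eq, eps4], ⟨?_, ?_, ?_⟩, ⟨?_, ?_, ?_⟩, ⟨?_, ?_, ?_⟩, ?_, ?_, ?_⟩ <;>
  · simp [hodge_eq, Fin.sum_univ_four, eta, eps4, h.z1, h.r1, h.r2, h.r3, h.r4, h.r5, h.r6]
    ring

/-- The polarized Bel-Robinson form. -/
noncomputable def Qb (V W : Fin 4 → Fin 4 → Fin 4 → Fin 4 → ℝ) (α β γ δ : Fin 4) : ℝ :=
  ∑ μ, ∑ ν, eta μ μ * eta ν ν *
    (V α μ β ν * W γ μ δ ν + hodge V α μ β ν * hodge W γ μ δ ν)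

theorem belRobinson_eq_s13 (W : Fin 4 → Fin 4 → Fin 4 → Fin 4 → ℝ) (α β γ δ : Fin 4) :
    belRobinson W α β γ δ = Qb W W α β γ δ := by
  unfold belRobinson Qb
  refine Finset.sum_congr rfl fun μ _ => Finset.sum_congr rfl fun ν _ => ?_
  rw [Finset.sum_eq_single μ, Finset.sum_eq_single ν]
  · intro b _ hb; simp [eta, hb.symm]
  · simp
  · intro b _ hb; simp [eta, hb.symm]
  · simp

/-- Components of the Hodge dual. -/
structure HodgeRules (W : Fin 4 → Fin 4 → Fin 4 → Fin 4 → ℝ) : Prop where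
  z : ∀ a c d, hodge W a a c d = 0
  a1 : ∀ c d, hodge W 0 1 c d = W 2 3 c d
  a2 : ∀ c d, hodge W 0 2 c d = -W 1 3 c d
  a3 : ∀ c d, hodge W 0 3 c d = W 1 2 c d
  b1 : ∀ c d, hodge W 1 0 c d = -W 2 3 c d
  b2 : ∀ c d, hodge W 2 0 c d = W 1 3 c d
  b3 : ∀ c d, hodge W 3 0 c d = -W 1 2 c d
  c1 : ∀ c d, hodge W 2 3 c d = -W 0 1 c d
  c2 : ∀ c d, hodge W 1 3 c d = W 0 2 c d
  c3 : ∀ c d, hodge W 1 2 c d = -W 0 3 c d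
  d1 : ∀ c d, hodge W 3 2 c d = W 0 1 c d
  d2 : ∀ c d, hodge W 3 1 c d = -W 0 2 c d
  d3 : ∀ c d, hodge W 2 1 c d = W 0 3 c d

theorem hodge_rules (W : Fin 4 → Fin 4 → Fin 4 → Fin 4 → ℝ) (h : WeylRules W) :
    HodgeRules W := by
  have H := hodge_comps W h
  exact ⟨fun a c d => (H c d).1 a, fun c d => (H c d).2.1.1, fun c d => (H c d).2.1.2.1,
    fun c d => (H c d).2.1.2.2, fun c d => (H c d).2.2.1.1, fun c d => (H c d).2.2.1.2.1,
    fun c d => (H c d).2.2.1.2.2, fun c d => (H c d).2.2.2.1.1, fun c d => (H c d).2.2.2.1.2.1,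
    fun c d => (H c d).2.2.2.1.2.2, fun c d => (H c d).2.2.2.2.1,
    fun c d => (H c d).2.2.2.2.2.1, fun c d => (H c d).2.2.2.2.2.2⟩

theorem Qb_symm (W : Fin 4 → Fin 4 → Fin 4 → Fin 4 → ℝ) (w : WeylRules W) (α β : Fin 4) :
    Qb W W α β 0 0 = Qb W W β α 0 0 := by
  have k := hodge_rules W w
  fin_cases α <;> fin_cases β <;>
  simp [Qb, Fin.sum_univ_four, eta, k.z, k.a1, k.a2, k.a3, k.b1, k.b2, k.b3, k.c1, k.c2, k.c3,
    k.d1, k.d2, k.d3, w.z1, w.z2, w.r1, w.r2, w.r3, w.r4, w.r5, w.r6, w.s1, w.s2, w.s3, w.s4,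
    w.s5, w.s6, w.c1, w.c2, w.c3, w.c4, w.c5, w.d1, w.d2, w.d3, w.d4, w.d5, w.d6, w.e1, w.e2,
    w.e3, w.f1, w.f2, w.f3, w.g1, w.g2, w.g3] <;> ring

theorem Qb_trace (W : Fin 4 → Fin 4 → Fin 4 → Fin 4 → ℝ) (w : WeylRules W) :
    Qb W W 0 0 0 0 = Qb W W 1 1 0 0 + Qb W W 2 2 0 0 + Qb W W 3 3 0 0 := by
  have k := hodge_rules W w
  simp [Qb, Fin.sum_univ_four, eta, k.z, k.a1, k.a2, k.a3, k.b1, k.b2, k.b3, k.c1, k.c2, k.c3,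
    k.d1, k.d2, k.d3, w.z1, w.z2, w.r1, w.r2, w.r3, w.r4, w.r5, w.r6, w.s1, w.s2, w.s3, w.s4,
    w.s5, w.s6, w.c1, w.c2, w.c3, w.c4, w.c5, w.d1, w.d2, w.d3, w.d4, w.d5, w.d6, w.e1, w.e2,
    w.e3, w.f1, w.f2, w.f3, w.g1, w.g2, w.g3]
  ring

theorem Qb_div (W : Fin 4 → Fin 4 → Fin 4 → Fin 4 → ℝ)
    (D : Fin 4 → Fin 4 → Fin 4 → Fin 4 → Fin 4 → ℝ)
    (w : WeylRules W) (v : ∀ μ, WeylRules (D μ))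
    (hdiv : ∀ β γ δ, ∑ α, ∑ μ, eta α μ * D μ α β γ δ = 0) (β : Fin 4) :
    ∑ α, eta α α * (Qb (D α) W α β 0 0 + Qb W (D α) α β 0 0) = 0 := by
  have k := hodge_rules W w
  have l := fun μ => hodge_rules (D μ) (v μ)
  have m : ∀ β γ δ, D 0 0 β γ δ = D 1 1 β γ δ + D 2 2 β γ δ + D 3 3 β γ δ := by
    intro β γ δ
    have := hdiv β γ δ
    simp [Fin.sum_univ_four, eta] at this
    linarith
  have n : ∀ γ δ, D 1 0 1 γ δ = - D 2 0 2 γ δ - D 3 0 3 γ δ := by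
    intro γ δ
    have := m 0 γ δ
    rw [(v 0).z1, (v 1).r1, (v 2).r2, (v 3).r3] at this
    linarith
  fin_cases β <;>
  simp [Qb, Fin.sum_univ_four, eta, k.z, k.a1, k.a2, k.a3, k.b1, k.b2, k.b3, k.c1, k.c2, k.c3,
    k.d1, k.d2, k.d3, w.z1, w.z2, w.r1, w.r2, w.r3, w.r4, w.r5, w.r6, w.s1, w.s2, w.s3, w.s4,
    w.s5, w.s6, w.c1, w.c2, w.c3, w.c4, w.c5, w.d1, w.d2, w.d3, w.d4, w.d5, w.d6, w.e1, w.e2,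
    w.e3, w.f1, w.f2, w.f3, w.g1, w.g2, w.g3,
    (l _).z, (l _).a1, (l _).a2, (l _).a3, (l _).b1, (l _).b2, (l _).b3, (l _).c1, (l _).c2,
    (l _).c3, (l _).d1, (l _).d2, (l _).d3, (v _).z1, (v _).z2, (v _).r1, (v _).r2, (v _).r3,
    (v _).r4, (v _).r5, (v _).r6, (v _).s1, (v _).s2, (v _).s3, (v _).s4,
    (v _).s5, (v _).s6, (v _).c1, (v _).c2, (v _).c3, (v _).c4, (v _).c5, (v _).d1, (v _).d2,
    (v _).d3, (v _).d4, (v _).d5, (v _).d6, (v _).e1, (v _).e2,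
    (v _).e3, (v _).f1, (v _).f2, (v _).f3, (v _).g1, (v _).g2, (v _).g3, m, n] <;> ring

/-- `f` is differentiable at `p` with `μ`-th partial derivative `d`. -/
def HD (μ : Fin 4) (p : Fin 4 → ℝ) (f : (Fin 4 → ℝ) → ℝ) (d : ℝ) : Prop :=
  DifferentiableAt ℝ f p ∧ pd4 f μ p = d

theorem HD.add {μ : Fin 4} {p : Fin 4 → ℝ} {f g : (Fin 4 → ℝ) → ℝ} {a b : ℝ}
    (hf : HD μ p f a) (hg : HD μ p g b) : HD μ p (fun q => f q + g q) (a + b) := by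
  refine ⟨hf.1.fun_add hg.1, ?_⟩
  rw [← hf.2, ← hg.2]
  simp [pd4, fderiv_fun_add hf.1 hg.1]

theorem HD.mul {μ : Fin 4} {p : Fin 4 → ℝ} {f g : (Fin 4 → ℝ) → ℝ} {a b : ℝ}
    (hf : HD μ p f a) (hg : HD μ p g b) : HD μ p (fun q => f q * g q) (a * g p + f p * b) := by
  refine ⟨hf.1.fun_mul hg.1, ?_⟩
  rw [← hf.2, ← hg.2]
  simp [pd4, fderiv_fun_mul hf.1 hg.1]
  ring

theorem HD.const {μ : Fin 4} {p : Fin 4 → ℝ} (c : ℝ) : HD μ p (fun _ => c) 0 := by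
  refine ⟨differentiableAt_const c, ?_⟩
  simp [pd4]

theorem HD.const_mul {μ : Fin 4} {p : Fin 4 → ℝ} {f : (Fin 4 → ℝ) → ℝ} {a : ℝ} (c : ℝ)
    (hf : HD μ p f a) : HD μ p (fun q => c * f q) (c * a) := by
  simpa using (HD.const c).mul hf

theorem HD.sum {μ : Fin 4} {p : Fin 4 → ℝ} {f : Fin 4 → (Fin 4 → ℝ) → ℝ} {a : Fin 4 → ℝ}
    (hf : ∀ i, HD μ p (f i) (a i)) : HD μ p (fun q => ∑ i, f i q) (∑ i, a i) := by
  simp only [Fin.sum_univ_four]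
  exact (((hf 0).add (hf 1)).add (hf 2)).add (hf 3)

theorem HD.coord (μ ν : Fin 4) (p : Fin 4 → ℝ) :
    HD μ p (fun q => q ν) (if μ = ν then 1 else 0) := by
  refine ⟨by fun_prop, ?_⟩
  have : HasFDerivAt (fun q : Fin 4 → ℝ => q ν)
    (ContinuousLinearMap.proj (R := ℝ) (φ := fun _ : Fin 4 => ℝ) ν) p :=
    (ContinuousLinearMap.proj (R := ℝ) (φ := fun _ : Fin 4 => ℝ) ν).hasFDerivAt
  simp [pd4, this.fderiv, Pi.single_apply, eq_comm]

theorem HD.Kvec (μ β : Fin 4) (p : Fin 4 → ℝ) :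
    HD μ p (fun q => morawetzK q β)
      (if β = 0 then 2 * p μ
        else 2 * (if μ = 0 then 1 else 0) * p β + 2 * p 0 * (if μ = β then 1 else 0)) := by
  unfold morawetzK
  have c := fun ν => HD.coord μ ν p
  by_cases hb : β = 0
  · simp only [hb, if_true]
    have e := ((c 0).mul (c 0)).add
      ((((c 1).mul (c 1)).add ((c 2).mul (c 2))).add ((c 3).mul (c 3)))
    simp only [pow_two]
    convert e using 1
    fin_cases μ <;> simp <;> ring
  · simp only [hb, if_false]
    exact ((c 0).const_mul 2).mul (c β)

theorem HD.hodge {μ : Fin 4} {p : Fin 4 → ℝ}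
    {W : (Fin 4 → ℝ) → Fin 4 → Fin 4 → Fin 4 → Fin 4 → ℝ}
    {D : Fin 4 → Fin 4 → Fin 4 → Fin 4 → ℝ}
    (h : ∀ α β γ δ, HD μ p (fun q => W q α β γ δ) (D α β γ δ)) (α β γ δ : Fin 4) :
    HD μ p (fun q => hodge (W q) α β γ δ) (hodge D α β γ δ) := by
  simp only [hodge_eq]
  exact (HD.sum fun ρ => HD.sum fun σ => (h ρ σ γ δ).const_mul _).const_mul _

theorem HD.Qb {μ : Fin 4} {p : Fin 4 → ℝ}
    {W : (Fin 4 → ℝ) → Fin 4 → Fin 4 → Fin 4 → Fin 4 → ℝ}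
    {D : Fin 4 → Fin 4 → Fin 4 → Fin 4 → ℝ}
    (h : ∀ α β γ δ, HD μ p (fun q => W q α β γ δ) (D α β γ δ)) (α β γ δ : Fin 4) :
    HD μ p (fun q => Qb (W q) (W q) α β γ δ) (Qb D (W p) α β γ δ + Qb (W p) D α β γ δ) := by
  have hh := HD.hodge h
  have e := HD.sum fun ρ => HD.sum fun σ =>
    (((h α ρ β σ).mul (h γ ρ δ σ)).add ((hh α ρ β σ).mul (hh γ ρ δ σ))).const_mul
      (eta ρ ρ * eta σ σ)
  unfold _root_.Qb
  convert e using 1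
  simp only [← Finset.sum_add_distrib]
  refine Finset.sum_congr rfl fun ρ _ => Finset.sum_congr rfl fun σ _ => ?_
  ring

theorem pd4_neg (f : (Fin 4 → ℝ) → ℝ) (μ : Fin 4) (p : Fin 4 → ℝ) :
    pd4 (fun q => -f q) μ p = -pd4 f μ p := by
  simp [pd4, fderiv_fun_neg]

theorem deriv_weyl {W : (Fin 4 → ℝ) → Fin 4 → Fin 4 → Fin 4 → Fin 4 → ℝ}
    (hWeyl : ∀ p, IsWeylTensor (W p)) {μ : Fin 4} {p : Fin 4 → ℝ}
    {D : Fin 4 → Fin 4 → Fin 4 → Fin 4 → ℝ}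
    (h : ∀ α β γ δ, HD μ p (fun q => W q α β γ δ) (D α β γ δ)) : IsWeylTensor D := by
  have hz : ∀ {f : (Fin 4 → ℝ) → ℝ} {d : ℝ}, HD μ p f d → (∀ q, f q = 0) → d = 0 := by
    intro f d hf h0
    have : f = fun _ => 0 := funext h0
    rw [← hf.2, this]
    exact (HD.const 0).2
  refine ⟨fun α β γ δ => ?_, fun α β γ δ => ?_, fun α β γ δ => ?_, fun α β γ δ => ?_,
    fun α β => ?_⟩
  · have := hz ((h α β γ δ).add (h β α γ δ)) fun q => by linarith [(hWeyl q).1 α β γ δ]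
    linarith
  · have := hz ((h α β γ δ).add (h α β δ γ)) fun q => by linarith [(hWeyl q).2.1 α β γ δ]
    linarith
  · have := hz ((h α β γ δ).add ((h γ δ α β).const_mul (-1))) fun q => by
      linarith [(hWeyl q).2.2.1 α β γ δ]
    linarith
  · exact hz (((h α β γ δ).add (h α γ δ β)).add (h α δ β γ)) fun q => (hWeyl q).2.2.2.1 α β γ δ
  · exact hz (HD.sum fun ρ => HD.sum fun σ => (h ρ α σ β).const_mul (eta ρ σ))
      fun q => (hWeyl q).2.2.2.2 α β

theorem current_eq (W : (Fin 4 → ℝ) → Fin 4 → Fin 4 → Fin 4 → Fin 4 → ℝ) (α : Fin 4)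
    (q : Fin 4 → ℝ) :
    morawetzCurrent W α q = ∑ β, Qb (W q) (W q) α β 0 0 * morawetzK q β := by
  simp [morawetzCurrent, belRobinson_eq_s13, Tvec]

/-- For a smooth Weyl field satisfying the vacuum Bianchi equations, the Morawetz
energy current `P_α = Q_{αβγδ} K₀^β T^γ T^δ` is divergence-free. -/
theorem morawetz_current_divergence_free
    (W : (Fin 4 → ℝ) → Fin 4 → Fin 4 → Fin 4 → Fin 4 → ℝ)
    (hSmooth : ∀ α β γ δ : Fin 4, ContDiff ℝ (⊤ : ℕ∞) fun p => W p α β γ δ)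
    (hWeyl : ∀ p, IsWeylTensor (W p))
    (hBianchiDiv : ∀ (p : Fin 4 → ℝ) (β γ δ : Fin 4),
      ∑ α, ∑ μ, eta α μ * pd4 (fun q => W q α β γ δ) μ p = 0)
    (hBianchiFull : ∀ (p : Fin 4 → ℝ) (l α β γ δ : Fin 4),
      pd4 (fun q => W q α β γ δ) l p + pd4 (fun q => W q β l γ δ) α p +
        pd4 (fun q => W q l α γ δ) β p = 0) :
    ∀ p : Fin 4 → ℝ,
      ∑ α, ∑ μ, eta α μ * pd4 (fun q => morawetzCurrent W α q) μ p = 0 := by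
  intro p
  have h : ∀ μ α β γ δ, HD μ p (fun q => W q α β γ δ) (pd4 (fun q => W q α β γ δ) μ p) :=
    fun μ α β γ δ => ⟨((hSmooth α β γ δ).differentiable (by simp)).differentiableAt, rfl⟩
  have hw := weyl_rules _ (hWeyl p)
  have hv := fun μ => weyl_rules _ (deriv_weyl hWeyl (h μ))
  have hd := Qb_div (W p) (fun μ α β γ δ => pd4 (fun q => W q α β γ δ) μ p) hw hv (hBianchiDiv p)
  have hc := fun μ α => (HD.sum fun β => (HD.Qb (h μ) α β 0 0).mul (HD.Kvec μ β p)).2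
  have ht := Qb_trace (W p) hw
  have hs := Qb_symm (W p) hw
  simp only [current_eq, hc]
  have d0 := hd 0
  have d1 := hd 1
  have d2 := hd 2
  have d3 := hd 3
  simp [Fin.sum_univ_four, eta] at d0 d1 d2 d3 ⊢
  rw [hs 1 0, hs 2 0, hs 3 0, ht]
  linear_combination morawetzK p 0 * d0 + morawetzK p 1 * d1 + morawetzK p 2 * d2 +
    morawetzK p 3 * d3
end

section
/- Let W be a Weyl field on ℝ⁴ (a smooth map assigning to each point a Weyl tensor and satisfying the vacuum Bianchi equations Σ_{α,μ} η^{αμ} ∂_μ W_{αβγδ} = 0 and ∂_λ W_{αβγδ} + ∂_α W_{βλγδ} + ∂_β W_{λαγδ} = 0), and suppose that for each t ∈ ℝ the map x ↦ W(t,x) has compact support in ℝ³. Then the total Bel-Robinson energy ℰ(t) := ∫_{ℝ³} Q_{0000}(t,x) dx is independent of t, where Q is the Bel-Robinson tensor field of W. -/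
open MeasureTheory

open Set in
theorem br_sqrt_deriv (y : ℝ) : ∃ d : ℝ, HasDerivAt (fun y : ℝ => √(1 + y ^ 2)) d y ∧ |d| ≤ 1 := by
  have hpos : (0 : ℝ) < 1 + y ^ 2 := by positivity
  have h1 : HasDerivAt (fun y : ℝ => 1 + y ^ 2) (2 * y) y := by
    simpa using (hasDerivAt_pow 2 y).const_add 1
  refine ⟨_, h1.sqrt hpos.ne', ?_⟩
  have hs : 0 < √(1 + y ^ 2) := Real.sqrt_pos.2 hpos
  have hy : |y| ≤ √(1 + y ^ 2) := Real.abs_le_sqrt (by linarith)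
  rw [abs_div, abs_mul, abs_mul, abs_of_pos hs, abs_two, div_le_one (by positivity)]
  linarith

/-- The argument of the cutoff. -/
noncomputable def brArg (c ρ : ℝ) (p : Fin 4 → ℝ) : ℝ :=
  ρ - c * p 0 - (√(1 + p 1 ^ 2) + √(1 + p 2 ^ 2) + √(1 + p 3 ^ 2))

theorem brArg_contDiff (c ρ : ℝ) : ContDiff ℝ (⊤ : ℕ∞) (brArg c ρ) := by
  unfold brArg
  have h : ∀ i : Fin 4, ContDiff ℝ (⊤ : ℕ∞) fun p : Fin 4 → ℝ => √(1 + p i ^ 2) := by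
    intro i
    apply ContDiff.sqrt
    · fun_prop
    · intro p; positivity
  have := h 1
  have := h 2
  have := h 3
  fun_prop

theorem brArg_pd (c ρ : ℝ) (p : Fin 4 → ℝ) :
    pd4 (brArg c ρ) 0 p = -c ∧ |pd4 (brArg c ρ) 1 p| ≤ 1 ∧ |pd4 (brArg c ρ) 2 p| ≤ 1 ∧
      |pd4 (brArg c ρ) 3 p| ≤ 1 := by
  obtain ⟨d1, h1, b1⟩ := br_sqrt_deriv (p 1)
  obtain ⟨d2, h2, b2⟩ := br_sqrt_deriv (p 2)
  obtain ⟨d3, h3, b3⟩ := br_sqrt_deriv (p 3)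
  have e : ∀ i : Fin 4, HasFDerivAt (fun p : Fin 4 → ℝ => p i)
      (ContinuousLinearMap.proj (R := ℝ) (φ := fun _ : Fin 4 => ℝ) i) p := fun i =>
    (ContinuousLinearMap.proj (R := ℝ) (φ := fun _ : Fin 4 => ℝ) i).hasFDerivAt
  have g1 := h1.comp_hasFDerivAt p (e 1)
  have g2 := h2.comp_hasFDerivAt p (e 2)
  have g3 := h3.comp_hasFDerivAt p (e 3)
  have := (((e 0).const_mul c).const_sub ρ).sub ((g1.add g2).add g3)
  have H : fderiv ℝ (brArg c ρ) p = _ := HasFDerivAt.fderiv this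
  simp only [pd4, H]
  simp [b1, b2, b3]

/-- The cutoff. -/
noncomputable def brCut (c ρ : ℝ) (p : Fin 4 → ℝ) : ℝ := Real.smoothTransition (brArg c ρ p)

theorem brCut_contDiff (c ρ : ℝ) : ContDiff ℝ (⊤ : ℕ∞) (brCut c ρ) :=
  Real.smoothTransition.contDiff.comp (brArg_contDiff c ρ)

theorem brCut_pd (c ρ : ℝ) (p : Fin 4 → ℝ) :
    ∃ k : ℝ, 0 ≤ k ∧ ∀ i, pd4 (brCut c ρ) i p = k * pd4 (brArg c ρ) i p := by
  refine ⟨deriv Real.smoothTransition (brArg c ρ p), Real.smoothTransition.monotone.deriv_nonneg,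
    fun i => ?_⟩
  have h1 : HasDerivAt Real.smoothTransition (deriv Real.smoothTransition (brArg c ρ p))
      (brArg c ρ p) :=
    ((Real.smoothTransition.contDiff (n := 1)).differentiable (by simp) _).hasDerivAt
  have h2 := ((brArg_contDiff c ρ).differentiable (by simp) p).hasFDerivAt
  have : fderiv ℝ (brCut c ρ) p = _ := (h1.comp_hasFDerivAt p h2).fderiv
  simp [pd4, this]

theorem br_pd_mul {f g : (Fin 4 → ℝ) → ℝ} (hf : ContDiff ℝ (⊤ : ℕ∞) f)
    (hg : ContDiff ℝ (⊤ : ℕ∞) g) (i : Fin 4) (p : Fin 4 → ℝ) :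
    pd4 (fun q => f q * g q) i p = pd4 f i p * g p + f p * pd4 g i p := by
  have h1 := ((hf.differentiable (by simp) p).hasFDerivAt)
  have h2 := ((hg.differentiable (by simp) p).hasFDerivAt)
  have : fderiv ℝ (fun q => f q * g q) p = _ := (h1.mul h2).fderiv
  simp [pd4, this]; ring

theorem br_pd_add {f g : (Fin 4 → ℝ) → ℝ} (hf : ContDiff ℝ (⊤ : ℕ∞) f)
    (hg : ContDiff ℝ (⊤ : ℕ∞) g) (i : Fin 4) (p : Fin 4 → ℝ) :
    pd4 (fun q => f q + g q) i p = pd4 f i p + pd4 g i p := by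
  have h1 := ((hf.differentiable (by simp) p).hasFDerivAt)
  have h2 := ((hg.differentiable (by simp) p).hasFDerivAt)
  have : fderiv ℝ (fun q => f q + g q) p = _ := (h1.add h2).fderiv
  simp [pd4, this]

theorem br_pd_neg {f : (Fin 4 → ℝ) → ℝ} (i : Fin 4) (p : Fin 4 → ℝ) :
    pd4 (fun q => -f q) i p = - pd4 f i p := by
  simp [pd4]

open Set in
/-- Weighted one-sided energy inequality. -/
theorem br_flux (J : Fin 4 → (Fin 4 → ℝ) → ℝ) (hJ : ∀ i, ContDiff ℝ (⊤ : ℕ∞) (J i))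
    (hdiv : ∀ p, ∑ i, pd4 (J i) i p = 0) (hb : ∀ i p, |J i p| ≤ J 0 p)
    (hs : ∀ t : ℝ, HasCompactSupport fun x : Fin 3 → ℝ => J 0 (Fin.cons t x))
    (σ : ℝ) (hσ : σ * σ = 1) (t₀ t₁ : ℝ) (ht : t₀ ≤ t₁) :
    σ * ((∫ x : Fin 3 → ℝ, J 0 (Fin.cons t₁ x)) - ∫ x : Fin 3 → ℝ, J 0 (Fin.cons t₀ x)) ≤ 0 := by
  -- a cutoff equal to one on the support of a given slice
  have hρ : ∀ t : ℝ, ∃ R : ℝ, ∀ ρ, R ≤ ρ → ∀ x : Fin 3 → ℝ,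
      brCut (3 * σ) ρ (Fin.cons t x) * J 0 (Fin.cons t x) = J 0 (Fin.cons t x) := by
    intro t
    have hcont : Continuous fun x : Fin 3 → ℝ => - brArg (3 * σ) 0 (Fin.cons t x) := by
      have := (brArg_contDiff (3 * σ) 0).continuous
      have h2 : Continuous fun x : Fin 3 → ℝ => (Fin.cons t x : Fin 4 → ℝ) := by fun_prop
      exact (this.comp h2).neg
    obtain ⟨R, hR⟩ := ((hs t).isCompact.bddAbove_image hcont.continuousOn)
    refine ⟨R + 1, fun ρ h x => ?_⟩
    by_cases hx : J 0 (Fin.cons t x) = 0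
    · simp [hx]
    · have hm : x ∈ tsupport fun x : Fin 3 → ℝ => J 0 (Fin.cons t x) := subset_tsupport _ hx
      have := hR (mem_image_of_mem _ hm)
      have h1 : brCut (3 * σ) ρ (Fin.cons t x) = 1 := by
        apply Real.smoothTransition.one_of_one_le
        simp only [brArg] at this ⊢
        linarith
      rw [h1, one_mul]
  obtain ⟨R0, hR0⟩ := hρ t₀
  obtain ⟨R1, hR1⟩ := hρ t₁
  obtain ⟨ρ, r0, r1, r2⟩ : ∃ ρ, R0 ≤ ρ ∧ R1 ≤ ρ ∧ 0 ≤ ρ :=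
    ⟨max R0 (max R1 0), by simp, by simp, by simp⟩
  specialize hR0 ρ r0
  specialize hR1 ρ r1
  set φ := brCut (3 * σ) ρ with hφ
  have hφs : ContDiff ℝ (⊤ : ℕ∞) φ := brCut_contDiff _ _
  have hσ1 : |σ| = 1 := by
    have : |σ| * |σ| = 1 := by rw [← abs_mul, hσ, abs_one]
    nlinarith [abs_nonneg σ]
  set L := ρ + 3 * (|t₀| + |t₁|) with hL
  have hL0 : 0 ≤ L := by positivity
  -- the cutoff vanishes off the box
  have hzero : ∀ p : Fin 4 → ℝ, t₀ ≤ p 0 → p 0 ≤ t₁ → (∃ i, i ≠ 0 ∧ L ≤ |p i|) → φ p = 0 := by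
    rintro p h0 h1 ⟨i, hi, hi'⟩
    apply Real.smoothTransition.zero_of_nonpos
    have hp : |p 0| ≤ |t₀| + |t₁| := by
      rw [abs_le]; constructor
      · linarith [neg_abs_le t₀, abs_nonneg t₁]
      · linarith [le_abs_self t₁, abs_nonneg t₀]
    have hc : -(3 * σ * p 0) ≤ 3 * (|t₀| + |t₁|) := by
      have : |σ * p 0| ≤ |t₀| + |t₁| := by rw [abs_mul, hσ1, one_mul]; exact hp
      linarith [neg_abs_le (σ * p 0)]
    have hn : ∀ j, 0 ≤ √(1 + p j ^ 2) := fun j => Real.sqrt_nonneg _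
    have hy : ∀ j, |p j| ≤ √(1 + p j ^ 2) := fun j => Real.abs_le_sqrt (by linarith)
    have := hy i
    have := hn 1
    have := hn 2
    have := hn 3
    unfold brArg
    fin_cases i
    · exact absurd rfl hi
    all_goals
      simp only [Fin.mk_one, Fin.reduceFinMk] at *
      linarith
  have hfs : ∀ i, ContDiff ℝ (⊤ : ℕ∞) fun p => φ p * J i p := fun i => hφs.mul (hJ i)
  have hcd : ∀ i, Continuous fun p => fderiv ℝ (fun p => φ p * J i p) p := fun i =>
    (hfs i).continuous_fderiv (by simp)
  let a : Fin 4 → ℝ := Fin.cons t₀ fun _ => -L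
  let b : Fin 4 → ℝ := Fin.cons t₁ fun _ => L
  have hab : a ≤ b := by
    intro i
    refine Fin.cases ?_ (fun j => ?_) i
    · simpa [a, b] using ht
    · simp only [a, b, Fin.cons_succ]; linarith
  have key := MeasureTheory.integral_divergence_of_hasFDerivAt_off_countable' a b hab
    (fun i p => φ p * J i p) (fun i p => fderiv ℝ (fun p => φ p * J i p) p) ∅ countable_empty
    (fun i => (hfs i).continuous.continuousOn)
    (fun x _ i => ((hfs i).differentiable (by simp) x).hasFDerivAt)
    (by
      apply Continuous.integrableOn_Icc
      have : ∀ i : Fin 4, Continuous fun p =>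
        fderiv ℝ (fun p => φ p * J i p) p (Pi.single i 1) := fun i => (hcd i).clm_apply continuous_const
      fun_prop)
  -- the bulk term has a sign
  have hbulk : σ * (∫ p in Icc a b, ∑ i, fderiv ℝ (fun p => φ p * J i p) p (Pi.single i 1)) ≤ 0 := by
    rw [← integral_const_mul]
    apply integral_nonpos
    intro p
    change σ * ∑ i, pd4 (fun p => φ p * J i p) i p ≤ 0
    have h1 : ∑ i, pd4 (fun p => φ p * J i p) i p = ∑ i, pd4 φ i p * J i p := by
      simp_rw [br_pd_mul hφs (hJ _)]
      rw [Finset.sum_add_distrib, ← Finset.mul_sum, hdiv, mul_zero, add_zero]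
    rw [h1]
    obtain ⟨k, hk, hk'⟩ := brCut_pd (3 * σ) ρ p
    obtain ⟨d0, d1, d2, d3⟩ := brArg_pd (3 * σ) ρ p
    simp_rw [hφ, hk', Fin.sum_univ_four, d0]
    have hJ0 : 0 ≤ J 0 p := (abs_nonneg _).trans (hb 0 p)
    have bd : ∀ i d, |d| ≤ 1 → σ * (d * J i p) ≤ J 0 p := by
      intro i d hd
      refine (le_abs_self _).trans ?_
      rw [abs_mul, hσ1, one_mul, abs_mul]
      calc |d| * |J i p| ≤ 1 * J 0 p := mul_le_mul hd (hb i p) (abs_nonneg _) zero_le_one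
        _ = _ := one_mul _
    have b1 := bd 1 _ d1
    have b2 := bd 2 _ d2
    have b3 := bd 3 _ d3
    have : σ * (k * -(3 * σ) * J 0 p + k * pd4 (brArg (3 * σ) ρ) 1 p * J 1 p +
        k * pd4 (brArg (3 * σ) ρ) 2 p * J 2 p + k * pd4 (brArg (3 * σ) ρ) 3 p * J 3 p) =
        k * (-(3 * (σ * σ)) * J 0 p + σ * (pd4 (brArg (3 * σ) ρ) 1 p * J 1 p) +
        σ * (pd4 (brArg (3 * σ) ρ) 2 p * J 2 p) + σ * (pd4 (brArg (3 * σ) ρ) 3 p * J 3 p)) := by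
      ring
    rw [this, hσ]
    exact mul_nonpos_of_nonneg_of_nonpos hk (by linarith)
  rw [key, Fin.sum_univ_succ] at hbulk
  have hside : ∀ j : Fin 3, ∀ c : ℝ, |c| = L →
      (∫ x in Icc (a ∘ j.succ.succAbove) (b ∘ j.succ.succAbove),
        φ (j.succ.insertNth c x) * J j.succ (j.succ.insertNth c x)) = 0 := by
    intro j c hc
    have hins : ∀ x : Fin 3 → ℝ, (j.succ.insertNth c x : Fin 4 → ℝ) 0 = x 0 := by
      intro x
      fin_cases j <;> rfl
    apply MeasureTheory.setIntegral_eq_zero_of_forall_eq_zero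
    intro x hx
    rw [hzero, zero_mul]
    · rw [hins]
      have := hx.1 0
      simpa [a] using this
    · rw [hins]
      have := hx.2 0
      simpa [b] using this
    · exact ⟨j.succ, Fin.succ_ne_zero j, by simp [hc]⟩
  have hend : ∀ t, t₀ ≤ t → t ≤ t₁ →
      (∫ x in Icc (a ∘ Fin.succAbove 0) (b ∘ Fin.succAbove 0),
        φ ((0 : Fin 4).insertNth t x) * J 0 ((0 : Fin 4).insertNth t x)) =
      ∫ x : Fin 3 → ℝ, φ (Fin.cons t x) * J 0 (Fin.cons t x) := by
    intro t h0 h1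
    simp only [Fin.insertNth_zero']
    apply MeasureTheory.setIntegral_eq_integral_of_forall_compl_eq_zero
    intro x hx
    rw [hzero _ (by simpa using h0) (by simpa using h1), zero_mul]
    by_contra hcon
    push Not at hcon
    apply hx
    constructor <;> intro j <;> have := hcon j.succ (Fin.succ_ne_zero j) <;>
      simp only [Fin.cons_succ, abs_lt] at this <;> simp [a, b] <;> linarith [this.1, this.2]
  have hsum : ∑ j : Fin 3, ((∫ x in Icc (a ∘ j.succ.succAbove) (b ∘ j.succ.succAbove),
        φ (j.succ.insertNth (b j.succ) x) * J j.succ (j.succ.insertNth (b j.succ) x)) -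
      ∫ x in Icc (a ∘ j.succ.succAbove) (b ∘ j.succ.succAbove),
        φ (j.succ.insertNth (a j.succ) x) * J j.succ (j.succ.insertNth (a j.succ) x)) = 0 := by
    apply Finset.sum_eq_zero
    intro j _
    rw [hside j _ (by simp [b, abs_of_nonneg hL0]), hside j _ (by simp [a, abs_of_nonneg hL0]),
      sub_zero]
  rw [hsum, add_zero, hend _ (by simpa [b] using ht) (by simp [b]),
    hend _ (by simp [a]) (by simpa [a] using ht)] at hbulk
  simp only [b, a, Fin.cons_zero] at hbulk
  simp_rw [hR0, hR1] at hbulk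
  exact hbulk

theorem br_conserved (J : Fin 4 → (Fin 4 → ℝ) → ℝ) (hJ : ∀ i, ContDiff ℝ (⊤ : ℕ∞) (J i))
    (hdiv : ∀ p, ∑ i, pd4 (J i) i p = 0) (hb : ∀ i p, |J i p| ≤ J 0 p)
    (hs : ∀ t : ℝ, HasCompactSupport fun x : Fin 3 → ℝ => J 0 (Fin.cons t x))
    (t₀ t₁ : ℝ) :
    (∫ x : Fin 3 → ℝ, J 0 (Fin.cons t₀ x)) = ∫ x : Fin 3 → ℝ, J 0 (Fin.cons t₁ x) := by
  rcases le_total t₀ t₁ with h | h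
  · have h1 := br_flux J hJ hdiv hb hs 1 (by norm_num) t₀ t₁ h
    have h2 := br_flux J hJ hdiv hb hs (-1) (by norm_num) t₀ t₁ h
    linarith
  · have h1 := br_flux J hJ hdiv hb hs 1 (by norm_num) t₁ t₀ h
    have h2 := br_flux J hJ hdiv hb hs (-1) (by norm_num) t₁ t₀ h
    linarith

theorem br_eta_sum (f : Fin 4 → ℝ) (μ : Fin 4) :
    ∑ ρ, eta μ ρ * f ρ = eta μ μ * f μ := by
  simp [eta, Finset.sum_ite_eq]

theorem br_hodge (W : Fin 4 → Fin 4 → Fin 4 → Fin 4 → ℝ)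
    (h : ∀ α β γ δ, W α β γ δ = -W β α γ δ) (γ δ : Fin 4) :
    hodge W 0 0 γ δ = 0 ∧ hodge W 0 1 γ δ = W 2 3 γ δ ∧ hodge W 0 2 γ δ = W 3 1 γ δ ∧
      hodge W 0 3 γ δ = W 1 2 γ δ := by
  have h32 := h 3 2 γ δ
  have h13 := h 1 3 γ δ
  have h21 := h 2 1 γ δ
  refine ⟨?_, ?_, ?_, ?_⟩ <;>
  · simp [hodge, Fin.sum_univ_four, eta, eps4]
    try linarith

/-- energy density -/
noncomputable def brE (W : Fin 4 → Fin 4 → Fin 4 → Fin 4 → ℝ) (k : Fin 4) : ℝ :=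
  W 0 1 0 k * W 0 1 0 k + W 0 2 0 k * W 0 2 0 k + W 0 3 0 k * W 0 3 0 k +
    (W 2 3 0 k * W 2 3 0 k + W 3 1 0 k * W 3 1 0 k + W 1 2 0 k * W 1 2 0 k)

theorem br_Q (W : Fin 4 → Fin 4 → Fin 4 → Fin 4 → ℝ) (hW : IsWeylTensor W) :
    belRobinson W 0 0 0 0 = brE W 1 + brE W 2 + brE W 3 := by
  obtain ⟨h, h2, -, -, -⟩ := hW
  have z1 : ∀ γ δ, W 0 0 γ δ = 0 := fun γ δ => by linarith [h 0 0 γ δ]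
  have z2 : ∀ γ δ, W γ δ 0 0 = 0 := fun γ δ => by linarith [h2 γ δ 0 0]
  have key : belRobinson W 0 0 0 0 = ∑ μ, ∑ ν, eta μ μ * eta ν ν *
      (W 0 μ 0 ν * W 0 μ 0 ν + hodge W 0 μ 0 ν * hodge W 0 μ 0 ν) := by
    unfold belRobinson
    refine Finset.sum_congr rfl fun μ _ => Finset.sum_congr rfl fun ν _ => ?_
    simp_rw [mul_assoc, ← Finset.mul_sum, br_eta_sum]
  rw [key]
  simp only [Fin.sum_univ_four, (br_hodge W h _ _).1, (br_hodge W h _ _).2.1,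
    (br_hodge W h _ _).2.2.1, (br_hodge W h _ _).2.2.2, z1, z2]
  simp [eta, brE]
  ring

/-- the conserved current -/
noncomputable def brJ (W : Fin 4 → Fin 4 → Fin 4 → Fin 4 → ℝ) (k : Fin 4) : Fin 4 → ℝ :=
  ![brE W k,
    2 * (W 0 3 0 k * W 3 1 0 k - W 0 2 0 k * W 1 2 0 k),
    2 * (W 0 1 0 k * W 1 2 0 k - W 0 3 0 k * W 2 3 0 k),
    2 * (W 0 2 0 k * W 2 3 0 k - W 0 1 0 k * W 3 1 0 k)]

theorem brJ_bound (W : Fin 4 → Fin 4 → Fin 4 → Fin 4 → ℝ) (k i : Fin 4) :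
    |brJ W k i| ≤ brJ W k 0 := by
  have s := fun x : ℝ => mul_self_nonneg x
  rw [abs_le]
  fin_cases i <;> simp [brJ, brE] <;> try constructor
  · nlinarith [s (W 0 1 0 k), s (W 0 2 0 k), s (W 0 3 0 k), s (W 2 3 0 k), s (W 3 1 0 k), s (W 1 2 0 k)]
  · nlinarith [s (W 0 3 0 k + W 3 1 0 k), s (W 0 2 0 k - W 1 2 0 k), s (W 0 1 0 k), s (W 2 3 0 k)]
  · nlinarith [s (W 0 3 0 k - W 3 1 0 k), s (W 0 2 0 k + W 1 2 0 k), s (W 0 1 0 k), s (W 2 3 0 k)]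
  · nlinarith [s (W 0 1 0 k + W 1 2 0 k), s (W 0 3 0 k - W 2 3 0 k), s (W 0 2 0 k), s (W 3 1 0 k)]
  · nlinarith [s (W 0 1 0 k - W 1 2 0 k), s (W 0 3 0 k + W 2 3 0 k), s (W 0 2 0 k), s (W 3 1 0 k)]
  · nlinarith [s (W 0 2 0 k + W 2 3 0 k), s (W 0 1 0 k - W 3 1 0 k), s (W 0 3 0 k), s (W 1 2 0 k)]
  · nlinarith [s (W 0 2 0 k - W 2 3 0 k), s (W 0 1 0 k + W 3 1 0 k), s (W 0 3 0 k), s (W 1 2 0 k)]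

theorem brJ_contDiff (W : (Fin 4 → ℝ) → Fin 4 → Fin 4 → Fin 4 → Fin 4 → ℝ)
    (hS : ∀ α β γ δ : Fin 4, ContDiff ℝ (⊤ : ℕ∞) fun p => W p α β γ δ) (k i : Fin 4) :
    ContDiff ℝ (⊤ : ℕ∞) fun p => brJ (W p) k i := by
  fin_cases i <;> simp [brJ, brE] <;> fun_prop

theorem br_pd_prod_sub {f g u v : (Fin 4 → ℝ) → ℝ} (hf : ContDiff ℝ (⊤ : ℕ∞) f)
    (hg : ContDiff ℝ (⊤ : ℕ∞) g) (hu : ContDiff ℝ (⊤ : ℕ∞) u)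
    (hv : ContDiff ℝ (⊤ : ℕ∞) v) (i : Fin 4) (p : Fin 4 → ℝ) :
    pd4 (fun q => 2 * (f q * g q - u q * v q)) i p = 2 * (pd4 f i p * g p + f p * pd4 g i p -
      (pd4 u i p * v p + u p * pd4 v i p)) := by
  have h1 := ((hf.differentiable (by simp) p).hasFDerivAt)
  have h2 := ((hg.differentiable (by simp) p).hasFDerivAt)
  have h3 := ((hu.differentiable (by simp) p).hasFDerivAt)
  have h4 := ((hv.differentiable (by simp) p).hasFDerivAt)
  have : fderiv ℝ (fun q => 2 * (f q * g q - u q * v q)) p = _ :=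
    (((h1.mul h2).sub (h3.mul h4)).const_mul 2).fderiv
  simp [pd4, this]; ring

theorem brJ_div (W : (Fin 4 → ℝ) → Fin 4 → Fin 4 → Fin 4 → Fin 4 → ℝ)
    (hSmooth : ∀ α β γ δ : Fin 4, ContDiff ℝ (⊤ : ℕ∞) fun p => W p α β γ δ)
    (hWeyl : ∀ p, IsWeylTensor (W p))
    (hBianchiDiv : ∀ (p : Fin 4 → ℝ) (β γ δ : Fin 4),
      ∑ α, ∑ μ, eta α μ * pd4 (fun q => W q α β γ δ) μ p = 0)
    (hBianchiFull : ∀ (p : Fin 4 → ℝ) (l α β γ δ : Fin 4),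
      pd4 (fun q => W q α β γ δ) l p + pd4 (fun q => W q β l γ δ) α p +
        pd4 (fun q => W q l α γ δ) β p = 0) (k : Fin 4) (p : Fin 4 → ℝ) :
    ∑ i, pd4 (fun q => brJ (W q) k i) i p = 0 := by
  have anti : ∀ α β μ, pd4 (fun q => W q α β 0 k) μ p = - pd4 (fun q => W q β α 0 k) μ p := by
    intro α β μ
    rw [← br_pd_neg]
    congr 1
    funext q
    exact (hWeyl q).1 α β 0 k
  have same : ∀ α μ, pd4 (fun q => W q α α 0 k) μ p = 0 := fun α μ => by linarith [anti α α μ]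
  have D : ∀ β, -pd4 (fun q => W q 0 β 0 k) 0 p + pd4 (fun q => W q 1 β 0 k) 1 p +
      pd4 (fun q => W q 2 β 0 k) 2 p + pd4 (fun q => W q 3 β 0 k) 3 p = 0 := by
    intro β
    have := hBianchiDiv p β 0 k
    simp_rw [br_eta_sum (fun μ => pd4 (fun q => W q _ β 0 k) μ p)] at this
    simpa [Fin.sum_univ_four, eta] using this
  have D1 := D 1
  have D2 := D 2
  have D3 := D 3
  have F1 := hBianchiFull p 0 2 3 0 k
  have F2 := hBianchiFull p 0 3 1 0 k
  have F3 := hBianchiFull p 0 1 2 0 k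
  rw [same] at D1 D2 D3
  rw [anti 2 1] at D1
  rw [anti 3 2] at D2
  rw [anti 1 3] at D3
  rw [anti 3 0] at F1
  rw [anti 1 0] at F2
  rw [anti 2 0] at F3
  have m := fun α β γ δ => br_pd_mul (hSmooth α β γ δ) (hSmooth α β γ δ)
  have c := fun α β γ δ => (hSmooth α β γ δ).mul (hSmooth α β γ δ)
  have e0 : pd4 (fun q => brE (W q) k) 0 p =
      2 * (W p 0 1 0 k * pd4 (fun q => W q 0 1 0 k) 0 p +
        W p 0 2 0 k * pd4 (fun q => W q 0 2 0 k) 0 p +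
        W p 0 3 0 k * pd4 (fun q => W q 0 3 0 k) 0 p +
        W p 2 3 0 k * pd4 (fun q => W q 2 3 0 k) 0 p +
        W p 3 1 0 k * pd4 (fun q => W q 3 1 0 k) 0 p +
        W p 1 2 0 k * pd4 (fun q => W q 1 2 0 k) 0 p) := by
    unfold brE
    rw [br_pd_add (((c _ _ _ _).add (c _ _ _ _)).add (c _ _ _ _))
      (((c _ _ _ _).add (c _ _ _ _)).add (c _ _ _ _)),
      br_pd_add ((c _ _ _ _).add (c _ _ _ _)) (c _ _ _ _), br_pd_add (c _ _ _ _) (c _ _ _ _),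
      br_pd_add ((c _ _ _ _).add (c _ _ _ _)) (c _ _ _ _), br_pd_add (c _ _ _ _) (c _ _ _ _),
      m, m, m, m, m, m]
    ring
  rw [Fin.sum_univ_four]
  simp only [brJ, Matrix.cons_val]
  rw [e0, br_pd_prod_sub (hSmooth _ _ _ _) (hSmooth _ _ _ _) (hSmooth _ _ _ _) (hSmooth _ _ _ _),
    br_pd_prod_sub (hSmooth _ _ _ _) (hSmooth _ _ _ _) (hSmooth _ _ _ _) (hSmooth _ _ _ _),
    br_pd_prod_sub (hSmooth _ _ _ _) (hSmooth _ _ _ _) (hSmooth _ _ _ _) (hSmooth _ _ _ _)]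
  linear_combination (-2 * W p 0 1 0 k) * D1 + (-2 * W p 0 2 0 k) * D2 + (-2 * W p 0 3 0 k) * D3 +
    (2 * W p 2 3 0 k) * F1 + (2 * W p 3 1 0 k) * F2 + (2 * W p 1 2 0 k) * F3

/-- Conservation of the total Bel-Robinson energy: for a smooth Weyl field on `ℝ⁴`
satisfying the vacuum Bianchi equations, with compact spatial support on each time
slice, the energy `ℰ(t) = ∫_{ℝ³} Q_{0000}(t,x) dx` is independent of `t`. -/
theorem belRobinson_energy_conservation
    (W : (Fin 4 → ℝ) → Fin 4 → Fin 4 → Fin 4 → Fin 4 → ℝ)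
    (hSmooth : ∀ α β γ δ : Fin 4, ContDiff ℝ (⊤ : ℕ∞) fun p => W p α β γ δ)
    (hWeyl : ∀ p, IsWeylTensor (W p))
    (hBianchiDiv : ∀ (p : Fin 4 → ℝ) (β γ δ : Fin 4),
      ∑ α, ∑ μ, eta α μ * pd4 (fun q => W q α β γ δ) μ p = 0)
    (hBianchiFull : ∀ (p : Fin 4 → ℝ) (l α β γ δ : Fin 4),
      pd4 (fun q => W q α β γ δ) l p + pd4 (fun q => W q β l γ δ) α p +
        pd4 (fun q => W q l α γ δ) β p = 0)
    (hSupp : ∀ t : ℝ, HasCompactSupport fun x : Fin 3 → ℝ => W (Fin.cons t x)) :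
    ∀ t₁ t₂ : ℝ,
      (∫ x : Fin 3 → ℝ, belRobinson (W (Fin.cons t₁ x)) 0 0 0 0) =
        ∫ x : Fin 3 → ℝ, belRobinson (W (Fin.cons t₂ x)) 0 0 0 0 := by
  intro t₁ t₂
  simp_rw [br_Q _ (hWeyl _)]
  have hc := brJ_contDiff W hSmooth
  have hd := brJ_div W hSmooth hWeyl hBianchiDiv hBianchiFull
  refine br_conserved (fun i p => brJ (W p) 1 i + brJ (W p) 2 i + brJ (W p) 3 i)
    (fun i => ((hc 1 i).add (hc 2 i)).add (hc 3 i)) (fun p => ?_) (fun i p => ?_) (fun t => ?_) t₁ t₂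
  · simp_rw [br_pd_add ((hc 1 _).add (hc 2 _)) (hc 3 _), br_pd_add (hc 1 _) (hc 2 _),
      Finset.sum_add_distrib, hd]
    simp
  · exact (abs_add_three _ _ _).trans
      (add_le_add (add_le_add (brJ_bound _ _ _) (brJ_bound _ _ _)) (brJ_bound _ _ _))
  · exact (hSupp t).comp_left (g := fun w => brJ w 1 0 + brJ w 2 0 + brJ w 3 0)
      (by simp [brJ, brE])
end

section
/- Let ψ₀, ψ₁ : ℝ³ → ℝ be smooth compactly supported functions and let ψ : ℝ × ℝ³ → ℝ be the smooth solution of the free wave equation -∂_t²ψ + Δψ = 0 with ψ(0,·) = ψ₀ and ∂_tψ(0,·) = ψ₁. Then there exists a constant C (depending on ψ₀ and ψ₁) such that for all t ≥ 0 and all x ∈ ℝ³: |ψ(t,x)| ≤ C (1+t+|x|)^{-1} (1+|t-|x||)^{-1/2}. -/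
open MeasureTheory

/-- Applying a vector field `V` (as a first-order differential operator) to a function. -/
noncomputable def applyV (V : (ℝ × (Fin 3 → ℝ)) → ℝ × (Fin 3 → ℝ))
    (ψ : (ℝ × (Fin 3 → ℝ)) → ℝ) : (ℝ × (Fin 3 → ℝ)) → ℝ :=
  fun p => fderiv ℝ ψ p (V p)

/-- The time translation `∂_t`. -/
noncomputable def transT : (ℝ × (Fin 3 → ℝ)) → ℝ × (Fin 3 → ℝ) := fun _ => (1, 0)

/-- The spatial translation `∂_{x_i}`. -/
noncomputable def transX (i : Fin 3) : (ℝ × (Fin 3 → ℝ)) → ℝ × (Fin 3 → ℝ) :=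
  fun _ => (0, Pi.single i 1)


abbrev E3 := EuclideanSpace ℝ (Fin 3)
abbrev S2 := Metric.sphere (0 : E3) 1
noncomputable abbrev sig : Measure S2 := (volume : Measure E3).toSphere

lemma sig_univ_pos : 0 < sig.real Set.univ := by
  rw [Measure.toSphere_real_apply_univ]
  have : 0 < (volume : Measure E3).real (Metric.ball 0 1) := by
    rw [measureReal_def]
    exact ENNReal.toReal_pos (Metric.measure_ball_pos _ _ one_pos).ne' measure_ball_lt_top.ne
  have h3 : Module.finrank ℝ E3 = 3 := by simp
  rw [h3]; positivity

lemma hasDeriv_param {K : Type*} [TopologicalSpace K] [CompactSpace K] [MeasurableSpace K]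
    [OpensMeasurableSpace K] (μ : Measure K) [IsFiniteMeasure μ] (F F' : ℝ → K → ℝ)
    (hF : Continuous (fun q : ℝ × K => F q.1 q.2)) (hF' : Continuous (fun q : ℝ × K => F' q.1 q.2))
    (hd : ∀ r k, HasDerivAt (fun s => F s k) (F' r k) r) (r : ℝ) :
    HasDerivAt (fun s => ∫ k, F s k ∂μ) (∫ k, F' r k ∂μ) r := by
  have hc : IsCompact (Metric.closedBall r 1 ×ˢ (Set.univ : Set K)) :=
    (isCompact_closedBall r 1).prod isCompact_univ
  obtain ⟨M, hM⟩ := hc.exists_bound_of_continuousOn hF'.continuousOn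
  have c1 : ∀ s, Continuous (F s) := fun s => hF.comp (by fun_prop : Continuous fun k : K => (s, k))
  have c2 : ∀ s, Continuous (F' s) :=
    fun s => hF'.comp (by fun_prop : Continuous fun k : K => (s, k))
  have hint : ∀ f : K → ℝ, Continuous f → Integrable f μ := fun f hf => by
    obtain ⟨C, hC⟩ := isCompact_univ.exists_bound_of_continuousOn hf.continuousOn
    exact Integrable.of_bound hf.aestronglyMeasurable C
      (Filter.Eventually.of_forall fun x => hC x (Set.mem_univ _))
  refine (hasDerivAt_integral_of_dominated_loc_of_deriv_le (F := F) (F' := F')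
    (bound := fun _ => M) (Metric.closedBall_mem_nhds r one_pos)
    (Filter.Eventually.of_forall fun s => (c1 s).aestronglyMeasurable)
    (hint _ (c1 r)) (c2 r).aestronglyMeasurable
    (Filter.Eventually.of_forall fun k s hs => hM (s, k) ⟨hs, Set.mem_univ _⟩)
    (integrable_const _) (Filter.Eventually.of_forall fun k s _ => hd s k)).2

open scoped Pointwise in
lemma sig_rot (L : E3 ≃ₗᵢ[ℝ] E3) (f : E3 → ℝ) (hf : Continuous f) :
    ∫ w : S2, f (L w) ∂sig = ∫ w : S2, f w ∂sig := by
  let e : S2 → S2 := fun w => ⟨L w, by simp⟩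
  have he : Continuous e := by
    apply Continuous.subtype_mk
    exact L.continuous.comp continuous_subtype_val
  have hmap : Measure.map e sig = sig := by
    ext s hs
    rw [Measure.map_apply he.measurable hs, Measure.toSphere_apply' _ hs,
      Measure.toSphere_apply' _ (he.measurable hs)]
    congr 1
    have hp := L.measurePreserving.measure_preimage_emb
      L.toHomeomorph.measurableEmbedding (Set.Ioo (0 : ℝ) 1 • ((Subtype.val : S2 → E3) '' s))
    rw [← hp]
    congr 1
    ext y
    simp only [Set.mem_smul, Set.mem_preimage, Set.mem_image]
    constructor
    · rintro ⟨a, ha, _, ⟨w, hw, rfl⟩, rfl⟩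
      exact ⟨a, ha, _, ⟨e w, hw, rfl⟩, by simp [e]⟩
    · rintro ⟨a, ha, _, ⟨w, hw, rfl⟩, h⟩
      have hh : e ⟨L.symm w, by simp⟩ = w := by ext1; simp [e]
      refine ⟨a, ha, _, ⟨⟨L.symm w, by simp⟩, by rw [hh]; exact hw, rfl⟩, ?_⟩
      apply L.injective
      rw [L.map_smul]
      simpa using h
  have := integral_map (μ := sig) he.aemeasurable (f := fun w : S2 => f w)
    (hf.comp continuous_subtype_val).aestronglyMeasurable
  rw [hmap] at this
  exact this.symm

lemma cap_bound (x : E3) (R t : ℝ) (ht : 0 < t) :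
    sig.real {w : S2 | ‖x + t • (w : E3)‖ ≤ R} * t ^ 2 ≤
      (volume : Measure E3).real (Metric.closedBall 0 (R + 1)) := by
  set A := {w : S2 | ‖x + t • (w : E3)‖ ≤ R} with hA
  have hAm : MeasurableSet A := by
    apply IsClosed.measurableSet
    exact isClosed_le (by fun_prop) continuous_const
  let a : Set.Ioi (0:ℝ) := ⟨t, ht⟩
  let b : Set.Ioi (0:ℝ) := ⟨t + 1, by simp; linarith⟩
  have h1 := (volume : Measure E3).measurePreserving_homeomorphUnitSphereProd.measure_preimage
    (s := A ×ˢ (Set.Ico a b)) (hAm.prod measurableSet_Ico).nullMeasurableSet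
  have h3 : Module.finrank ℝ E3 - 1 = 2 := by simp
  rw [Measure.prod_prod, h3] at h1
  have h4 : ENNReal.ofReal (t ^ 2) ≤ Measure.volumeIoiPow 2 (Set.Ico a b) := by
    have hI : Set.Ico a b = Set.Iio b \ Set.Iio a := by
      ext z; simp
    rw [hI, measure_sdiff (Set.Iio_subset_Iio (by simp [a, b, ← Subtype.coe_le_coe]))
      measurableSet_Iio.nullMeasurableSet (by rw [Measure.volumeIoiPow_apply_Iio]; simp),
      Measure.volumeIoiPow_apply_Iio, Measure.volumeIoiPow_apply_Iio,
      ← ENNReal.ofReal_sub _ (by positivity)]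
    apply ENNReal.ofReal_le_ofReal
    simp only [a, b]
    push_cast
    nlinarith
  have h5 : sig A * ENNReal.ofReal (t ^ 2) ≤
      (volume : Measure E3) (Metric.closedBall (-x) (R + 1)) := by
    refine (mul_le_mul_right h4 _).trans ?_
    rw [← h1, comap_subtype_coe_apply (measurableSet_singleton _).compl]
    apply measure_mono
    rintro _ ⟨y, ⟨hy1, hy2⟩, rfl⟩
    simp only [hA, Set.mem_ofPred_eq, homeomorphUnitSphereProd_apply_fst_coe] at hy1
    have hy3 : t ≤ ‖(y : E3)‖ := by simpa using Subtype.coe_le_coe.2 hy2.1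
    have hy4 : ‖(y : E3)‖ < t + 1 := by simpa using Subtype.coe_lt_coe.2 hy2.2
    have hy0 : ‖(y : E3)‖ ≠ 0 := by linarith
    have key : (y : E3) + x = (x + t • (‖(y : E3)‖⁻¹ • (y : E3))) +
        (‖(y : E3)‖ - t) • (‖(y : E3)‖⁻¹ • (y : E3)) := by
      rw [add_assoc, ← add_smul, smul_smul, add_sub_cancel, mul_inv_cancel₀ hy0, one_smul, add_comm]
    have hn : ‖(‖(y : E3)‖ - t) • (‖(y : E3)‖⁻¹ • (y : E3))‖ ≤ 1 := by
      rw [norm_smul, norm_smul, norm_inv, norm_norm, inv_mul_cancel₀ hy0, Real.norm_eq_abs,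
        abs_of_nonneg (by linarith)]
      linarith
    rw [Metric.mem_closedBall, dist_eq_norm, sub_neg_eq_add, key]
    exact (norm_add_le _ _).trans (add_le_add hy1 hn)
  have h6 : (volume : Measure E3) (Metric.closedBall (-x) (R + 1)) =
      volume (Metric.closedBall (0 : E3) (R + 1)) := Measure.addHaar_closedBall_center _ _ _
  rw [h6] at h5
  have h7 := ENNReal.toReal_mono measure_closedBall_lt_top.ne h5
  rw [ENNReal.toReal_mul, ENNReal.toReal_ofReal (by positivity)] at h7
  exact h7

noncomputable def rotG (i j : Fin 3) (w : E3) : E3 :=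
  w i • EuclideanSpace.single j 1 - w j • EuclideanSpace.single i 1

noncomputable def rotP (i j : Fin 3) (w : E3) : E3 :=
  w i • EuclideanSpace.single i 1 + w j • EuclideanSpace.single j 1

noncomputable def rotL (i j : Fin 3) (hij : i ≠ j) (θ : ℝ) : E3 ≃ₗᵢ[ℝ] E3 :=
  LinearIsometry.toLinearIsometryEquiv
    { toFun := fun w => w + (Real.cos θ - 1) • rotP i j w + Real.sin θ • rotG i j w
      map_add' := by
        intro x y
        simp only [rotP, rotG, PiLp.add_apply]
        module
      map_smul' := by
        intro c x
        simp only [rotP, rotG, PiLp.smul_apply, smul_eq_mul, RingHom.id_apply]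
        module
      norm_map' := by
        intro w
        simp only [LinearMap.coe_mk, AddHom.coe_mk]
        rw [EuclideanSpace.norm_eq, EuclideanSpace.norm_eq]
        congr 1
        have := Real.sin_sq_add_cos_sq θ
        fin_cases i <;> fin_cases j <;> first | exact absurd rfl hij |
          (simp [Fin.sum_univ_three, rotP, rotG]
           first
            | linear_combination (w 0 ^ 2 + w 1 ^ 2) * this
            | linear_combination (w 0 ^ 2 + w 2 ^ 2) * this
            | linear_combination (w 1 ^ 2 + w 2 ^ 2) * this) } rfl


lemma rotL_apply (i j : Fin 3) (hij : i ≠ j) (θ : ℝ) (w : E3) : rotL i j hij θ w =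
    w + (Real.cos θ - 1) • rotP i j w + Real.sin θ • rotG i j w := rfl

lemma rotG_cont (i j : Fin 3) : Continuous (rotG i j) := by unfold rotG; fun_prop
lemma rotP_cont (i j : Fin 3) : Continuous (rotP i j) := by unfold rotP; fun_prop

lemma integral_rotG (i j : Fin 3) (hij : i ≠ j) (h : E3 → ℝ) (hh : ContDiff ℝ 1 h) :
    ∫ w : S2, fderiv ℝ h w (rotG i j w) ∂sig = 0 := by
  have cG := rotG_cont i j
  have cP := rotP_cont i j
  have ch := hh.continuous
  have ch' := hh.continuous_fderiv one_ne_zero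
  have key := hasDeriv_param sig (fun θ (w : S2) => h (rotL i j hij θ w))
    (fun θ (w : S2) => fderiv ℝ h (rotL i j hij θ w)
      ((-Real.sin θ) • rotP i j w + Real.cos θ • rotG i j w))
    (by simp only [rotL_apply]; fun_prop)
    (by simp only [rotL_apply]; fun_prop) ?_ 0
  · have hc : (fun θ => ∫ w : S2, h (rotL i j hij θ w) ∂sig) = fun _ => ∫ w : S2, h w ∂sig := by
      funext θ
      exact sig_rot _ h ch
    rw [hc] at key
    have := key.unique (hasDerivAt_const _ _)
    simpa [rotL_apply] using this
  · intro θ w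
    have h1 : HasDerivAt (fun θ => rotL i j hij θ (w : E3))
        ((-Real.sin θ) • rotP i j w + Real.cos θ • rotG i j w) θ := by
      simp only [rotL_apply]
      have := (((Real.hasDerivAt_cos θ).sub_const 1).smul_const (rotP i j w)).const_add (w : E3)
      exact this.add ((Real.hasDerivAt_sin θ).smul_const (rotG i j w))
    exact ((hh.differentiable one_ne_zero _).hasFDerivAt).comp_hasDerivAt θ h1

lemma applyV_decomp (f : (ℝ × (Fin 3 → ℝ)) → ℝ) (p : ℝ × (Fin 3 → ℝ)) (τ : ℝ) (v : Fin 3 → ℝ) :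
    fderiv ℝ f p (τ, v) = τ * applyV transT f p + ∑ i, v i * applyV (transX i) f p := by
  have h : (τ, v) = τ • ((1 : ℝ), (0 : Fin 3 → ℝ)) +
      ∑ i, v i • ((0 : ℝ), (Pi.single i 1 : Fin 3 → ℝ)) := by
    ext k
    · simp [Prod.fst_sum]
    · simp [Prod.snd_sum, Pi.single_apply]
  rw [h, map_add, map_sum, map_smul]
  simp only [map_smul, smul_eq_mul, applyV, transT, transX]

lemma applyV_smooth (c : ℝ × (Fin 3 → ℝ)) (f : (ℝ × (Fin 3 → ℝ)) → ℝ)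
    (hf : ContDiff ℝ (⊤ : ℕ∞) f) : ContDiff ℝ (⊤ : ℕ∞) (applyV (fun _ => c) f) := by
  unfold applyV
  exact (hf.fderiv_right (m := (⊤ : ℕ∞)) (by simp)).clm_apply contDiff_const

lemma applyV_comm (c d : ℝ × (Fin 3 → ℝ)) (f : (ℝ × (Fin 3 → ℝ)) → ℝ)
    (hf : ContDiff ℝ (⊤ : ℕ∞) f) (p : ℝ × (Fin 3 → ℝ)) :
    applyV (fun _ => c) (applyV (fun _ => d) f) p =
      applyV (fun _ => d) (applyV (fun _ => c) f) p := by
  have hs : IsSymmSndFDerivAt ℝ f p := hf.contDiffAt.isSymmSndFDerivAt (by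
    rw [minSmoothness_of_isRCLikeNormedField]
    exact WithTop.coe_le_coe.2 (le_top : (2 : ℕ∞) ≤ ⊤))
  have hd : DifferentiableAt ℝ (fderiv ℝ f) p :=
    (hf.fderiv_right (m := (⊤ : ℕ∞)) (by simp)).differentiable (by simp) p
  have e : ∀ a b : ℝ × (Fin 3 → ℝ), applyV (fun _ => a) (applyV (fun _ => b) f) p =
      fderiv ℝ (fderiv ℝ f) p a b := by
    intro a b
    unfold applyV
    rw [fderiv_clm_apply hd (differentiableAt_const b)]
    simp
  rw [e, e]
  exact hs.eq c d

noncomputable def ptP (t₀ : ℝ) (x₀ : Fin 3 → ℝ) (r : ℝ) (w : E3) : ℝ × (Fin 3 → ℝ) :=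
  (t₀ - r, x₀ + r • w.ofLp)

lemma ptP_r (t₀ : ℝ) (x₀ : Fin 3 → ℝ) (r : ℝ) (w : E3) :
    HasDerivAt (fun r => ptP t₀ x₀ r w) (-1, w.ofLp) r := by
  unfold ptP
  have h1 : HasDerivAt (fun r => t₀ - r) (-1) r := by simpa using (hasDerivAt_id r).const_sub t₀
  have h2 : HasDerivAt (fun r : ℝ => x₀ + r • w.ofLp) (w.ofLp) r := by
    simpa using ((hasDerivAt_id r).smul_const w.ofLp).const_add x₀
  exact h1.prodMk h2

lemma ptP_w (t₀ : ℝ) (x₀ : Fin 3 → ℝ) (r : ℝ) (w v : E3) :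
    HasDerivAt (fun s : ℝ => ptP t₀ x₀ r (w + s • v)) (0, r • v.ofLp) 0 := by
  unfold ptP
  have h1 : HasDerivAt (fun s : ℝ => t₀ - r) 0 0 := hasDerivAt_const _ _
  have h2 : HasDerivAt (fun s : ℝ => x₀ + r • (w + s • v).ofLp) (r • v.ofLp) 0 := by
    have : (fun s : ℝ => x₀ + r • (w + s • v).ofLp) =
        fun s : ℝ => (x₀ + r • w.ofLp) + s • (r • v.ofLp) := by
      funext s; simp only [WithLp.ofLp_add, WithLp.ofLp_smul]; module
    rw [this]
    simpa using ((hasDerivAt_id (0 : ℝ)).smul_const (r • v.ofLp)).const_add (x₀ + r • w.ofLp)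
  exact h1.prodMk h2

lemma ptP_smooth (t₀ : ℝ) (x₀ : Fin 3 → ℝ) (r : ℝ) :
    ContDiff ℝ 1 (fun w : E3 => ptP t₀ x₀ r w) := by
  unfold ptP; fun_prop

lemma ptP_cont (t₀ : ℝ) (x₀ : Fin 3 → ℝ) :
    Continuous (fun q : ℝ × S2 => ptP t₀ x₀ q.1 q.2) := by
  unfold ptP; fun_prop

lemma hder (f : (ℝ × (Fin 3 → ℝ)) → ℝ) (hf : ContDiff ℝ (⊤ : ℕ∞) f) (g : ℝ → ℝ × (Fin 3 → ℝ))
    (s : ℝ) (τ : ℝ) (v : Fin 3 → ℝ) (hg : HasDerivAt g (τ, v) s) :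
    HasDerivAt (fun s => f (g s))
      (τ * applyV transT f (g s) + ∑ i, v i * applyV (transX i) f (g s)) s := by
  rw [← applyV_decomp]
  exact ((hf.differentiable (by simp) _).hasFDerivAt).comp_hasDerivAt s hg

lemma rotTerm (i j : Fin 3) (hij : i ≠ j) (ψ : (ℝ × (Fin 3 → ℝ)) → ℝ)
    (hψ : ContDiff ℝ (⊤ : ℕ∞) ψ) (t₀ : ℝ) (x₀ : Fin 3 → ℝ) (r : ℝ) :
    ∫ w : S2, (-(w.1 i * applyV (transX i) ψ (ptP t₀ x₀ r w)
      + w.1 j * applyV (transX j) ψ (ptP t₀ x₀ r w))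
      + r * (w.1 i ^ 2 * applyV (transX j) (applyV (transX j) ψ) (ptP t₀ x₀ r w)
        + w.1 j ^ 2 * applyV (transX i) (applyV (transX i) ψ) (ptP t₀ x₀ r w)
        - 2 * w.1 i * w.1 j * applyV (transX i) (applyV (transX j) ψ) (ptP t₀ x₀ r w))) ∂sig
      = 0 := by
  have sm : ∀ k, ContDiff ℝ (⊤ : ℕ∞) (applyV (transX k) ψ) := fun k => applyV_smooth _ _ hψ
  have hP := ptP_smooth t₀ x₀ r
  have smP : ∀ k, ContDiff ℝ 1 (fun w : E3 => applyV (transX k) ψ (ptP t₀ x₀ r w)) :=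
    fun k => ((sm k).of_le (by exact_mod_cast le_top)).comp hP
  let h : E3 → ℝ := fun w => w i * applyV (transX j) ψ (ptP t₀ x₀ r w)
    - w j * applyV (transX i) ψ (ptP t₀ x₀ r w)
  have hh : ContDiff ℝ 1 h := by
    have := smP i
    have := smP j
    simp only [h]
    fun_prop
  rw [← integral_rotG i j hij h hh]
  refine integral_congr_ae (Filter.Eventually.of_forall fun w => ?_)
  dsimp only
  have hl : HasDerivAt (fun s : ℝ => h (w + s • rotG i j w)) (fderiv ℝ h w (rotG i j w)) 0 := by
    have := ((hh.differentiable one_ne_zero w.1).hasFDerivAt)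
    have h2 : HasDerivAt (fun s : ℝ => (w : E3) + s • rotG i j w) (rotG i j w) 0 := by
      simpa using ((hasDerivAt_id (0 : ℝ)).smul_const (rotG i j w)).const_add (w : E3)
    have h3 : HasFDerivAt h (fderiv ℝ h w) ((w : E3) + (0 : ℝ) • rotG i j w) := by simpa using this
    exact h3.comp_hasDerivAt 0 h2
  have hb : ∀ k, _ := fun k => hder _ (sm k) _ 0 _ _ (ptP_w t₀ x₀ r w (rotG i j w))
  have hw : ∀ k, HasDerivAt (fun s : ℝ => ((w : E3) + s • rotG i j w) k) (rotG i j w k) 0 := by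
    intro k
    simpa using ((hasDerivAt_id (0 : ℝ)).mul_const (rotG i j w k)).const_add ((w : E3) k)
  have hr := ((hw i).mul (hb j)).sub ((hw j).mul (hb i))
  rw [hl.unique hr]
  have cm : ∀ k l, applyV (transX k) (applyV (transX l) ψ) (ptP t₀ x₀ r w) =
    applyV (transX l) (applyV (transX k) ψ) (ptP t₀ x₀ r w) :=
    fun k l => applyV_comm _ _ _ hψ _
  have c10 := cm 1 0
  have c20 := cm 2 0
  have c21 := cm 2 1
  clear hr hl hb hw hh smP sm hP cm
  fin_cases i <;> fin_cases j <;> first | exact absurd rfl hij |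
    (simp [Fin.sum_univ_three, rotG, c10, c20, c21]; ring)

lemma kirchhoff (ψ : (ℝ × (Fin 3 → ℝ)) → ℝ) (hψ : ContDiff ℝ (⊤ : ℕ∞) ψ)
    (hwave : ∀ p : ℝ × (Fin 3 → ℝ),
      -(applyV transT (applyV transT ψ) p) +
        ∑ i, applyV (transX i) (applyV (transX i) ψ) p = 0) (t₀ : ℝ) (x₀ : Fin 3 → ℝ) :
    sig.real Set.univ * ψ (t₀, x₀) = ∫ w : S2, (ψ (ptP t₀ x₀ t₀ w) +
      t₀ * (∑ i, w.1 i * applyV (transX i) ψ (ptP t₀ x₀ t₀ w)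
        + applyV transT ψ (ptP t₀ x₀ t₀ w))) ∂sig := by
  have sm : ∀ k, ContDiff ℝ (⊤ : ℕ∞) (applyV (transX k) ψ) := fun k => applyV_smooth _ _ hψ
  have smt : ContDiff ℝ (⊤ : ℕ∞) (applyV transT ψ) := applyV_smooth _ _ hψ
  have smm : ∀ k l, ContDiff ℝ (⊤ : ℕ∞) (applyV (transX k) (applyV (transX l) ψ)) :=
    fun k l => applyV_smooth _ _ (sm l)
  have cP := ptP_cont t₀ x₀
  have cψ : Continuous (fun q : ℝ × S2 => ψ (ptP t₀ x₀ q.1 q.2)) := hψ.continuous.comp cP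
  have ct : Continuous (fun q : ℝ × S2 => applyV transT ψ (ptP t₀ x₀ q.1 q.2)) :=
    smt.continuous.comp cP
  have cb : ∀ k, Continuous (fun q : ℝ × S2 => applyV (transX k) ψ (ptP t₀ x₀ q.1 q.2)) :=
    fun k => (sm k).continuous.comp cP
  have cbb : ∀ k l, Continuous (fun q : ℝ × S2 =>
    applyV (transX k) (applyV (transX l) ψ) (ptP t₀ x₀ q.1 q.2)) :=
    fun k l => (smm k l).continuous.comp cP
  let T : Fin 3 → Fin 3 → ℝ → S2 → ℝ := fun i j r w =>
    -(w.1 i * applyV (transX i) ψ (ptP t₀ x₀ r w)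
      + w.1 j * applyV (transX j) ψ (ptP t₀ x₀ r w))
      + r * (w.1 i ^ 2 * applyV (transX j) (applyV (transX j) ψ) (ptP t₀ x₀ r w)
        + w.1 j ^ 2 * applyV (transX i) (applyV (transX i) ψ) (ptP t₀ x₀ r w)
        - 2 * w.1 i * w.1 j * applyV (transX i) (applyV (transX j) ψ) (ptP t₀ x₀ r w))
  have cT : ∀ i j, Continuous (fun q : ℝ × S2 => T i j q.1 q.2) := by
    intro i j
    have := cb i
    have := cb j
    have := cbb i i
    have := cbb j j
    have := cbb i j
    simp only [T]
    fun_prop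
  have iT : ∀ i j r, Integrable (T i j r) sig := fun i j r => by
    have hc : Continuous (T i j r) :=
      (cT i j).comp (by fun_prop : Continuous fun w : S2 => (r, w))
    obtain ⟨C, hC⟩ := isCompact_univ.exists_bound_of_continuousOn hc.continuousOn
    exact Integrable.of_bound hc.aestronglyMeasurable C
      (Filter.Eventually.of_forall fun x => hC x (Set.mem_univ _))
  let G : ℝ → S2 → ℝ := fun r w => ψ (ptP t₀ x₀ r w) +
      r * (∑ i, w.1 i * applyV (transX i) ψ (ptP t₀ x₀ r w)
        + applyV transT ψ (ptP t₀ x₀ r w))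
  have cG : Continuous (fun q : ℝ × S2 => G q.1 q.2) := by
    simp only [G]; fun_prop
  have hG : ∀ r w, HasDerivAt (fun s => G s w) (-(T 0 1 r w + T 0 2 r w + T 1 2 r w)) r := by
    intro r w
    have hp := ptP_r t₀ x₀ r w
    have h0 := hder ψ hψ _ _ _ _ hp
    have ht := hder _ smt _ _ _ _ hp
    have hb : ∀ k, _ := fun k => hder _ (sm k) _ _ _ _ hp
    have hs := HasDerivAt.fun_sum (u := Finset.univ)
      (fun (k : Fin 3) _ => (hb k).const_mul (w.1 k))
    have hall := h0.add ((hasDerivAt_id r).mul (hs.add ht))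
    refine HasDerivAt.congr_deriv (f := fun s => G s w) hall ?_
    have hwv := hwave (ptP t₀ x₀ r w)
    have cm : ∀ k l, applyV (transX k) (applyV (transX l) ψ) (ptP t₀ x₀ r w) =
      applyV (transX l) (applyV (transX k) ψ) (ptP t₀ x₀ r w) :=
      fun k l => applyV_comm _ _ _ hψ _
    have cmt : ∀ k, applyV transT (applyV (transX k) ψ) (ptP t₀ x₀ r w) =
      applyV (transX k) (applyV transT ψ) (ptP t₀ x₀ r w) :=
      fun k => applyV_comm _ _ _ hψ _
    have c10 := cm 1 0
    have c20 := cm 2 0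
    have c21 := cm 2 1
    have hn : w.1 0 ^ 2 + w.1 1 ^ 2 + w.1 2 ^ 2 = 1 := by
      have h1 : ‖w.1‖ = 1 := by simp
      have h2 := EuclideanSpace.norm_sq_eq w.1
      rw [h1] at h2
      simp [Fin.sum_univ_three] at h2
      linarith
    simp only [Fin.sum_univ_three, c10, c20, c21, cmt, T, Pi.add_apply, id] at hwv ⊢
    generalize applyV transT (applyV transT ψ) (ptP t₀ x₀ r w) = att at *
    have hatt : att = _ := (neg_add_eq_zero.mp hwv)
    rw [hatt]
    linear_combination r * (applyV (transX 0) (applyV (transX 0) ψ) (ptP t₀ x₀ r w) +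
      applyV (transX 1) (applyV (transX 1) ψ) (ptP t₀ x₀ r w) +
      applyV (transX 2) (applyV (transX 2) ψ) (ptP t₀ x₀ r w)) * hn
  have hI : ∀ r, HasDerivAt (fun s => ∫ w, G s w ∂sig) 0 r := by
    intro r
    have h1 := hasDeriv_param sig G _ cG
      (((cT 0 1).add (cT 0 2)).add (cT 1 2)).neg hG r
    convert h1 using 1
    have e1 := rotTerm 0 1 (by decide) ψ hψ t₀ x₀ r
    have e2 := rotTerm 0 2 (by decide) ψ hψ t₀ x₀ r
    have e3 := rotTerm 1 2 (by decide) ψ hψ t₀ x₀ r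
    change ∫ w, T 0 1 r w ∂sig = 0 at e1
    change ∫ w, T 0 2 r w ∂sig = 0 at e2
    change ∫ w, T 1 2 r w ∂sig = 0 at e3
    have i12 : Integrable (fun w => T 0 1 r w + T 0 2 r w) sig := (iT 0 1 r).add (iT 0 2 r)
    rw [integral_neg, integral_add i12 (iT 1 2 r),
      integral_add (iT 0 1 r) (iT 0 2 r), e1, e2, e3]
    simp
  have hconst := is_const_of_deriv_eq_zero (fun r => (hI r).differentiableAt)
    (fun r => (hI r).deriv) t₀ 0
  change _ = ∫ w, G t₀ w ∂sig
  rw [hconst]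
  simp [G, ptP]

/-- Sharp pointwise decay for solutions of the free wave equation on `ℝ × ℝ³` with
smooth compactly supported initial data:
`|ψ(t,x)| ≤ C (1+t+|x|)⁻¹ (1+|t-|x||)^{-1/2}` for `t ≥ 0`. -/
theorem linear_wave_sharp_decay
    (ψ₀ ψ₁ : (Fin 3 → ℝ) → ℝ)
    (hψ₀ : ContDiff ℝ (⊤ : ℕ∞) ψ₀) (hψ₀s : HasCompactSupport ψ₀)
    (hψ₁ : ContDiff ℝ (⊤ : ℕ∞) ψ₁) (hψ₁s : HasCompactSupport ψ₁)
    (ψ : (ℝ × (Fin 3 → ℝ)) → ℝ) (hψ : ContDiff ℝ (⊤ : ℕ∞) ψ)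
    (hwave : ∀ p : ℝ × (Fin 3 → ℝ),
      -(applyV transT (applyV transT ψ) p) +
        ∑ i, applyV (transX i) (applyV (transX i) ψ) p = 0)
    (hinit : ∀ x : Fin 3 → ℝ, ψ (0, x) = ψ₀ x)
    (hinit' : ∀ x : Fin 3 → ℝ, applyV transT ψ (0, x) = ψ₁ x) :
    ∃ C : ℝ, ∀ t : ℝ, 0 ≤ t → ∀ x : Fin 3 → ℝ,
      |ψ (t, x)| ≤
        C * (1 + t + enorm3 x)⁻¹ * (1 + |t - enorm3 x|) ^ (-(1 : ℝ) / 2) := by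
  have hdX : ∀ i y, applyV (transX i) ψ (0, y) = fderiv ℝ ψ₀ y (Pi.single i 1) := by
    intro i y
    have h1 : ψ₀ = fun y => ψ (0, y) := funext fun y => (hinit y).symm
    have h2 : HasFDerivAt (fun y : Fin 3 → ℝ => ((0 : ℝ), y))
        (ContinuousLinearMap.inr ℝ ℝ (Fin 3 → ℝ)) y := hasFDerivAt_prodMk_right 0 y
    have h3 := ((hψ.differentiable (by simp) ((0 : ℝ), y)).hasFDerivAt).comp y h2
    have h4 : fderiv ℝ ψ₀ y = (fderiv ℝ ψ (0, y)).comp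
        (ContinuousLinearMap.inr ℝ ℝ (Fin 3 → ℝ)) := by rw [h1]; exact h3.fderiv
    rw [h4]
    simp [applyV, transX]
  let K := tsupport ψ₀ ∪ tsupport ψ₁
  have hK : IsCompact K := hψ₀s.isCompact.union hψ₁s.isCompact
  let D : (Fin 3 → ℝ) → ℝ := fun y => |ψ₀ y| + |ψ₁ y| + ∑ i, |fderiv ℝ ψ₀ y (Pi.single i 1)|
  have cf : Continuous (fderiv ℝ ψ₀) := hψ₀.continuous_fderiv (by simp)
  have cD : Continuous D := by
    have := hψ₀.continuous
    have := hψ₁.continuous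
    simp only [D]
    fun_prop
  obtain ⟨M, hM⟩ := hK.exists_bound_of_continuousOn cD.continuousOn
  obtain ⟨R, hR⟩ := hK.exists_bound_of_continuousOn
    (f := fun y : Fin 3 → ℝ => (WithLp.toLp 2 y : E3)) (by fun_prop)
  have hD0 : ∀ y, y ∉ K → D y = 0 := by
    intro y hy
    have hy0 : y ∉ tsupport ψ₀ := fun h => hy (Or.inl h)
    have hy1 : y ∉ tsupport ψ₁ := fun h => hy (Or.inr h)
    have hf : fderiv ℝ ψ₀ y = 0 := by
      by_contra hne
      exact hy0 (support_fderiv_subset ℝ hne)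
    simp [D, hf, image_eq_zero_of_notMem_tsupport hy0, image_eq_zero_of_notMem_tsupport hy1]
  let M' := max M 0
  let R' := max R 0
  have hM' : 0 ≤ M' := le_max_right _ _
  have hR' : 0 ≤ R' := le_max_right _ _
  let V := (volume : Measure E3).real (Metric.closedBall 0 (R' + 1))
  have hV : 0 ≤ V := measureReal_nonneg
  let S := sig.real Set.univ
  have hS : 0 < S := sig_univ_pos
  have main : ∀ t : ℝ, 0 ≤ t → ∀ x : Fin 3 → ℝ, S * |ψ (t, x)| ≤
      (1 + t) * M' * sig.real {w : S2 | ‖(WithLp.toLp 2 x : E3) + t • (w : E3)‖ ≤ R'} := by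
    intro t ht x
    set A := {w : S2 | ‖(WithLp.toLp 2 x : E3) + t • (w : E3)‖ ≤ R'} with hA
    have hAm : MeasurableSet A :=
      (isClosed_le (by fun_prop) continuous_const).measurableSet
    have hk := kirchhoff ψ hψ hwave t x
    have hpt : ∀ w : S2, ptP t x t w = (0, x + t • w.1.ofLp) := by intro w; simp [ptP]
    simp only [hpt, hinit, hinit', hdX] at hk
    have hb : ‖∫ w : S2, (ψ₀ (x + t • w.1.ofLp) +
        t * (∑ i, w.1 i * fderiv ℝ ψ₀ (x + t • w.1.ofLp) (Pi.single i 1)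
          + ψ₁ (x + t • w.1.ofLp))) ∂sig‖ ≤ ∫ w : S2, A.indicator (fun _ => (1 + t) * M') w ∂sig := by
      apply norm_integral_le_of_norm_le ((integrable_const _).indicator hAm)
      refine Filter.Eventually.of_forall fun w => ?_
      set y := x + t • w.1.ofLp with hy
      have hwi : ∀ i, |w.1 i| ≤ 1 := by
        intro i
        have h1 := PiLp.norm_apply_le (p := 2) w.1 i
        have h2 : ‖w.1‖ = 1 := by simp
        rw [h2] at h1
        simpa using h1
      have hbd : ‖ψ₀ y + t * (∑ i, w.1 i * fderiv ℝ ψ₀ y (Pi.single i 1) + ψ₁ y)‖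
          ≤ (1 + t) * D y := by
        rw [Real.norm_eq_abs]
        have hsum : |∑ i, w.1 i * fderiv ℝ ψ₀ y (Pi.single i 1)| ≤
            ∑ i, |fderiv ℝ ψ₀ y (Pi.single i 1)| := by
          refine (Finset.abs_sum_le_sum_abs _ _).trans (Finset.sum_le_sum fun i _ => ?_)
          rw [abs_mul]
          exact mul_le_of_le_one_left (abs_nonneg _) (hwi i)
        have h1 := abs_add_le (ψ₀ y) (t * (∑ i, w.1 i * fderiv ℝ ψ₀ y (Pi.single i 1) + ψ₁ y))
        have h2 := abs_add_le (∑ i, w.1 i * fderiv ℝ ψ₀ y (Pi.single i 1)) (ψ₁ y)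
        rw [abs_mul, abs_of_nonneg ht] at h1
        have h3 := mul_le_mul_of_nonneg_left h2 ht
        have h4 := mul_le_mul_of_nonneg_left hsum ht
        have h5 : 0 ≤ t * |ψ₀ y| := mul_nonneg ht (abs_nonneg _)
        have h6 : 0 ≤ ∑ i, |fderiv ℝ ψ₀ y (Pi.single i 1)| := (abs_nonneg _).trans hsum
        have h7 := abs_nonneg (ψ₁ y)
        simp only [D]
        linarith
      refine hbd.trans ?_
      by_cases hyK : y ∈ K
      · have hwA : w ∈ A := by
          have := hR y hyK
          exact this.trans (le_max_left _ _)
        rw [Set.indicator_of_mem hwA]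
        have := hM y hyK
        exact mul_le_mul_of_nonneg_left ((le_abs_self _).trans (this.trans (le_max_left _ _)))
          (by linarith)
      · rw [hD0 y hyK, mul_zero]
        exact Set.indicator_nonneg (fun _ _ => by positivity) _
    rw [← hk, integral_indicator_const _ hAm, norm_mul, Real.norm_of_nonneg hS.le,
      Real.norm_eq_abs, smul_eq_mul] at hb
    linarith
  refine ⟨S⁻¹ * (M' * (2 * (S + V)) * (2 * (1 + R'))) * (1 + R') ^ ((1 : ℝ) / 2), ?_⟩
  intro t ht x
  have hm := main t ht x
  set A := {w : S2 | ‖(WithLp.toLp 2 x : E3) + t • (w : E3)‖ ≤ R'} with hA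
  have hen : enorm3 x = ‖(WithLp.toLp 2 x : E3)‖ := by
    rw [EuclideanSpace.norm_eq]; simp [enorm3]
  have hen0 : 0 ≤ enorm3 x := Real.sqrt_nonneg _
  by_cases hne : A.Nonempty
  · obtain ⟨w, hw⟩ := hne
    have hw : ‖(WithLp.toLp 2 x : E3) + t • (w : E3)‖ ≤ R' := hw
    have htw : ‖t • (w : E3)‖ = t := by rw [norm_smul]; simp [abs_of_nonneg ht]
    have hdiff : |t - enorm3 x| ≤ R' := by
      rw [hen]
      have h1 := abs_norm_sub_norm_le (t • (w : E3)) (-(WithLp.toLp 2 x : E3))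
      rw [htw, norm_neg, sub_neg_eq_add, add_comm (t • (w : E3))] at h1
      exact h1.trans hw
    have hσ1 : sig.real A ≤ S := measureReal_mono (Set.subset_univ _)
    have hσ2 : sig.real A * t ^ 2 ≤ V := by
      rcases ht.eq_or_lt with h0 | h0
      · rw [← h0]; simpa using hV
      · exact cap_bound _ _ _ h0
    have hσ3 : sig.real A * (1 + t) ^ 2 ≤ 2 * (S + V) := by
      have h0 : 0 ≤ sig.real A := measureReal_nonneg
      nlinarith [mul_nonneg h0 (sq_nonneg (1 - t))]
    have hx : 1 + t + enorm3 x ≤ (1 + R') * (2 * (1 + t)) := by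
      have := (abs_le.1 hdiff).1
      nlinarith
    have hp : 1 ≤ (1 + R') ^ ((1 : ℝ) / 2) * (1 + |t - enorm3 x|) ^ (-(1 : ℝ) / 2) := by
      have h1 : (1 + R') ^ (-(1 : ℝ) / 2) ≤ (1 + |t - enorm3 x|) ^ (-(1 : ℝ) / 2) :=
        Real.rpow_le_rpow_of_nonpos (by positivity) (by linarith) (by norm_num)
      calc (1 : ℝ) = (1 + R') ^ ((1 : ℝ) / 2) * (1 + R') ^ (-(1 : ℝ) / 2) := by
            rw [← Real.rpow_add (by positivity)]; norm_num
        _ ≤ _ := by gcongr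
    have hfin : |ψ (t, x)| ≤ S⁻¹ * (M' * (2 * (S + V)) * (2 * (1 + R'))) *
        (1 + t + enorm3 x)⁻¹ := by
      rw [← div_eq_mul_inv, le_div_iff₀ (by positivity), inv_mul_eq_div, le_div_iff₀ hS]
      calc |ψ (t, x)| * (1 + t + enorm3 x) * S = (S * |ψ (t, x)|) * (1 + t + enorm3 x) := by ring
        _ ≤ ((1 + t) * M' * sig.real A) * ((1 + R') * (2 * (1 + t))) := by gcongr
        _ = (M' * (2 * (1 + R'))) * (sig.real A * (1 + t) ^ 2) := by ring
        _ ≤ (M' * (2 * (1 + R'))) * (2 * (S + V)) := by gcongr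
        _ = _ := by ring
    have hc0 : 0 ≤ S⁻¹ * (M' * (2 * (S + V)) * (2 * (1 + R'))) * (1 + t + enorm3 x)⁻¹ := by
      positivity
    calc |ψ (t, x)| ≤ _ := hfin
      _ ≤ _ := le_mul_of_one_le_right hc0 hp
      _ = _ := by ring
  · rw [Set.not_nonempty_iff_eq_empty] at hne
    rw [hne] at hm
    have h0 : |ψ (t, x)| ≤ 0 := by
      have : S * |ψ (t, x)| ≤ 0 := by simpa using hm
      exact nonpos_of_mul_nonpos_right this hS
    refine h0.trans ?_
    positivity
end
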